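/- arXiv:0903.0444 — 6 statements merged into one kernel-verified Lean document; each statement's English description precedes it below -/
import Mathlib

section
/- A real 2×2 matrix A has an invariant proper cone if and only if (trace A)² ≥ 4·det A and trace A ≥ 0 (equivalently, if and only if the eigenvalues of A are real and the eigenvalue of maximal absolute value is nonnegative). -/
/-- A set `K ⊆ ℝ^m` is a proper cone: closed under nonnegative scaling,
convex (closed under addition), topologically closed, pointed and solid. -/
def IsProperCone {m : ℕ} (K : Set (Fin m → ℝ)) : Prop :=
  (∀ a : ℝ, 0 ≤ a → ∀ x ∈ K, a • x ∈ K) ∧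
  (∀ x ∈ K, ∀ y ∈ K, x + y ∈ K) ∧
  IsClosed K ∧ K ∩ (-K) = {0} ∧ (interior K).Nonempty

/-- `K` is invariant under the matrix `A`. -/
def InvariantUnder {m : ℕ} (A : Matrix (Fin m) (Fin m) ℝ) (K : Set (Fin m → ℝ)) : Prop :=
  ∀ x ∈ K, A.mulVec x ∈ K

/-!
Order the nonzero vectors of a closed salient cone in the plane by `x ≤ y` iff `0 ≤ wedge x y`,
where `wedge` is the signed area. Salience makes this relation transitive, so compactness of the
unit vectors of the cone provides a first vector `u` and a last vector `v`, spanning its extreme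
rays. Invariance bounds the four areas `wedge u (A u)`, `wedge u (A v)`, `wedge (A u) v` and
`wedge (A v) v` below by zero; the sum of the middle two is `trace A * wedge u v`, and
`discr A * (wedge u v)²` is a square plus four times the product of the outer two.

Conversely, with `τ = trace A / 2` and `δ = discr A / 4`, Cayley–Hamilton reads `(A - τ)² = δ`. If
a covector `ℓ` is not a left eigenvector, then `A` acts on the basis `ℓ (A - τ), ℓ` of covectors by
the matrix with rows `(τ, δ)` and `(1, τ)`, which is nonnegative under the stated conditions.
-/

open Matrix Set

section NonnegativeSimilarity

variable {m : ℕ}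

theorem isProperCone_setOf_nonneg_mulVec {P : Matrix (Fin m) (Fin m) ℝ} (hP : IsUnit P) :
    IsProperCone {x | 0 ≤ P *ᵥ x} := by
  have hcont : Continuous fun x : Fin m → ℝ => P *ᵥ x := by fun_prop
  refine ⟨fun a ha x hx => ?_, fun x hx y hy => ?_, isClosed_Ici.preimage hcont, ?_, ?_⟩
  · simpa only [mem_ofPred_eq, mulVec_smul] using smul_nonneg ha hx
  · simpa only [mem_ofPred_eq, mulVec_add] using add_nonneg hx hy
  · refine Subset.antisymm (fun x ⟨hx, hnx⟩ => ?_) (by simp)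
    have hPx : P *ᵥ x = P *ᵥ 0 := by
      simp only [mem_neg, mem_ofPred_eq, mulVec_neg, neg_nonneg] at hx hnx
      rw [mulVec_zero, le_antisymm hnx hx]
    exact mulVec_injective_of_isUnit hP hPx
  · obtain ⟨x, hx⟩ := mulVec_surjective_iff_isUnit.2 hP 1
    have hopen : IsOpen {y : Fin m → ℝ | ∀ i, 0 < (P *ᵥ y) i} := by
      simp only [ofPred_forall]
      exact isOpen_iInter_of_finite fun i => isOpen_lt continuous_const (by fun_prop)
    have hsub : {y : Fin m → ℝ | ∀ i, 0 < (P *ᵥ y) i} ⊆ {y | 0 ≤ P *ᵥ y} :=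
      fun y hy i => (hy i).le
    exact ⟨x, interior_maximal hsub hopen fun i => by simp [hx]⟩

theorem exists_isProperCone_invariantUnder_of_mul_eq {A P N : Matrix (Fin m) (Fin m) ℝ}
    (hP : IsUnit P) (hN : ∀ i j, 0 ≤ N i j) (h : P * A = N * P) :
    ∃ K : Set (Fin m → ℝ), IsProperCone K ∧ InvariantUnder A K := by
  refine ⟨_, isProperCone_setOf_nonneg_mulVec hP, fun x hx => ?_⟩
  rw [mem_ofPred_eq, mulVec_mulVec, h, ← mulVec_mulVec]
  exact fun i => dotProduct_nonneg_of_nonneg (hN i) hx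

end NonnegativeSimilarity

section Wedge

variable {R : Type*} [CommRing R]

/-- The signed area `x ∧ y = x₀ y₁ - x₁ y₀` of the parallelogram spanned by `x` and `y`, as a
bilinear form on the plane; it is positive when `y` lies counterclockwise of `x`. -/
def wedge : (Fin 2 → R) →ₗ[R] (Fin 2 → R) →ₗ[R] R :=
  LinearMap.mk₂ R (fun x y => x 0 * y 1 - x 1 * y 0)
    (fun x x' y => by simp only [Pi.add_apply]; ring)
    (fun c x y => by simp only [Pi.smul_apply, smul_eq_mul]; ring)
    (fun x y y' => by simp only [Pi.add_apply]; ring)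
    (fun c x y => by simp only [Pi.smul_apply, smul_eq_mul]; ring)

theorem wedge_apply (x y : Fin 2 → R) : wedge x y = x 0 * y 1 - x 1 * y 0 := rfl

theorem wedge_self (x : Fin 2 → R) : wedge x x = 0 := by
  rw [wedge_apply]; ring

theorem neg_wedge (x y : Fin 2 → R) : -wedge x y = wedge y x := by
  simp only [wedge_apply]; ring

theorem wedge_ne_zero {x : Fin 2 → R} (hx : x ≠ 0) : wedge x ≠ 0 := by
  contrapose! hx
  ext i
  fin_cases i
  · simpa [wedge_apply] using LinearMap.congr_fun hx ![0, 1]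
  · simpa [wedge_apply] using LinearMap.congr_fun hx ![1, 0]

theorem wedge_smul_eq_add (x y z : Fin 2 → R) :
    wedge x z • y = wedge y z • x + wedge x y • z := by
  ext i
  fin_cases i <;> simp [wedge_apply] <;> ring

theorem det_of_eq_wedge (x y : Fin 2 → R) : (of ![x, y]).det = wedge x y := by
  simp [det_fin_two, wedge_apply]

theorem trace_mul_wedge (A : Matrix (Fin 2) (Fin 2) R) (x y : Fin 2 → R) :
    A.trace * wedge x y = wedge (A *ᵥ x) y + wedge x (A *ᵥ y) := by
  simp only [trace_fin_two, wedge_apply, mulVec, dotProduct, Fin.sum_univ_two]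
  ring

theorem discr_mul_wedge_sq (A : Matrix (Fin 2) (Fin 2) R) (x y : Fin 2 → R) :
    A.discr * wedge x y ^ 2 =
      (wedge (A *ᵥ x) y - wedge x (A *ᵥ y)) ^ 2 + 4 * (wedge x (A *ᵥ x) * wedge (A *ᵥ y) y) := by
  simp only [discr_fin_two, trace_fin_two, det_fin_two, wedge_apply, mulVec, dotProduct,
    Fin.sum_univ_two]
  ring

theorem vecMul_vecMul_self_fin_two (A : Matrix (Fin 2) (Fin 2) R) (ℓ : Fin 2 → R) :
    ℓ ᵥ* A ᵥ* A = A.trace • (ℓ ᵥ* A) - A.det • ℓ := by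
  nontriviality R
  have hcayley : A * A = A.trace • A - A.det • 1 := by
    have h := A.aeval_self_charpoly
    simp only [charpoly_fin_two, map_add, map_sub, map_mul, Polynomial.aeval_X,
      Polynomial.aeval_C, Algebra.algebraMap_eq_smul_one, smul_one_mul, sq] at h
    rw [← sub_eq_zero, ← h]; abel
  rw [vecMul_vecMul, hcayley, vecMul_sub, vecMul_smul, vecMul_smul, vecMul_one]

theorem exists_wedge_vecMul_ne_zero {A : Matrix (Fin 2) (Fin 2) R}
    (hA : A ∉ range (scalar (Fin 2))) : ∃ ℓ : Fin 2 → R, wedge (ℓ ᵥ* A) ℓ ≠ 0 := by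
  contrapose! hA
  have h₁₀ : A 1 0 = 0 := by simpa [wedge_apply, vecMul, dotProduct] using hA ![0, 1]
  have h₀₁ : A 0 1 = 0 := by simpa [wedge_apply, vecMul, dotProduct] using hA ![1, 0]
  have h_diag : A 0 0 = A 1 1 := by
    simpa [wedge_apply, vecMul, dotProduct, h₁₀, h₀₁, sub_eq_zero] using hA ![1, 1]
  refine ⟨A 0 0, ?_⟩
  ext i j
  fin_cases i <;> fin_cases j <;> simp [h₁₀, h₀₁, h_diag]

end Wedge

section OrderedRing

variable {R : Type*} [CommRing R] [LinearOrder R] [IsStrictOrderedRing R]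

theorem wedge_nonneg_trans {C : PointedCone R (Fin 2 → R)} (hC : C.toConvexCone.Salient)
    {x y z : Fin 2 → R} (hx : x ∈ C) (hy : y ∈ C) (hz : z ∈ C) (hy0 : y ≠ 0)
    (hxy : 0 ≤ wedge x y) (hyz : 0 ≤ wedge y z) : 0 ≤ wedge x z := by
  by_contra! hxz
  have hmem : wedge x z • y ∈ C := by
    rw [wedge_smul_eq_add]
    exact C.add_mem (C.smul_mem hyz hx) (C.smul_mem hxy hz)
  refine hC (-wedge x z • y) (C.smul_mem (neg_nonneg.2 hxz.le) hy)
    (smul_ne_zero (neg_ne_zero.2 hxz.ne) hy0) ?_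
  rwa [neg_smul, neg_neg]

theorem trace_nonneg_of_wedge_nonneg {A : Matrix (Fin 2) (Fin 2) R} {u v : Fin 2 → R}
    (huv : 0 < wedge u v) (hAuv : 0 ≤ wedge (A *ᵥ u) v) (huAv : 0 ≤ wedge u (A *ᵥ v)) :
    0 ≤ A.trace := by
  refine nonneg_of_mul_nonneg_left ?_ huv
  rw [trace_mul_wedge]
  exact add_nonneg hAuv huAv

theorem discr_nonneg_of_wedge_nonneg {A : Matrix (Fin 2) (Fin 2) R} {u v : Fin 2 → R}
    (huv : 0 < wedge u v) (huAu : 0 ≤ wedge u (A *ᵥ u)) (hAvv : 0 ≤ wedge (A *ᵥ v) v) :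
    0 ≤ A.discr := by
  refine nonneg_of_mul_nonneg_left ?_ (pow_pos huv 2)
  rw [discr_mul_wedge_sq]
  positivity

end OrderedRing

theorem exists_isUnit_mul_eq_of_notMem_range_scalar {F : Type*} [Field F] [NeZero (2 : F)]
    {A : Matrix (Fin 2) (Fin 2) F} (hA : A ∉ range (scalar (Fin 2))) :
    ∃ P : Matrix (Fin 2) (Fin 2) F,
      IsUnit P ∧ P * A = !![A.trace / 2, A.discr / 4; 1, A.trace / 2] * P := by
  obtain ⟨ℓ, hℓ⟩ := exists_wedge_vecMul_ne_zero hA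
  refine ⟨of ![ℓ ᵥ* A - (A.trace / 2) • ℓ, ℓ], ?_, ?_⟩
  · rw [isUnit_iff_isUnit_det, det_of_eq_wedge, isUnit_iff_ne_zero]
    simpa [wedge_self] using hℓ
  · have h2 : (2 : F) ≠ 0 := NeZero.ne 2
    have h4 : (4 : F) ≠ 0 := by
      rw [show (4 : F) = 2 * 2 by norm_num]; exact mul_ne_zero h2 h2
    have hrow : (ℓ ᵥ* A - (A.trace / 2) • ℓ) ᵥ* A =
        (A.trace / 2) • (ℓ ᵥ* A - (A.trace / 2) • ℓ) + (A.discr / 4) • ℓ := by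
      rw [sub_vecMul, smul_vecMul, vecMul_vecMul_self_fin_two, discr_fin_two]
      match_scalars <;> field_simp <;> ring
    rw [cons_mul, cons_mul, hrow]
    ext i j
    fin_cases i <;> simp [mul_apply]

theorem exists_isUnit_mul_eq_nonneg_mul {A : Matrix (Fin 2) (Fin 2) ℝ} (hdiscr : 0 ≤ A.discr)
    (htrace : 0 ≤ A.trace) :
    ∃ P N : Matrix (Fin 2) (Fin 2) ℝ, IsUnit P ∧ (∀ i j, 0 ≤ N i j) ∧ P * A = N * P := by
  by_cases hA : A ∈ range (scalar (Fin 2))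
  · obtain ⟨c, rfl⟩ := hA
    have hc : 0 ≤ c := by simpa [trace_fin_two] using htrace
    refine ⟨1, _, isUnit_one, fun i j => ?_, (Commute.one_left _).eq⟩
    fin_cases i <;> fin_cases j <;> simp [hc]
  · obtain ⟨P, hP, hPA⟩ := exists_isUnit_mul_eq_of_notMem_range_scalar hA
    refine ⟨P, _, hP, fun i j => ?_, hPA⟩
    have hτ : 0 ≤ A.trace / 2 := by positivity
    have hδ : 0 ≤ A.discr / 4 := by positivity
    fin_cases i <;> fin_cases j
    exacts [hτ, hδ, zero_le_one, hτ]

theorem exists_forall_rel_of_compactSpace {X : Type*} [TopologicalSpace X] [CompactSpace X]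
    [Nonempty X] {r : X → X → Prop} (htrans : ∀ x y z, r x y → r y z → r x z)
    (hdir : ∀ x y, ∃ z, r z x ∧ r z y) (hclosed : ∀ y, IsClosed {x | r x y}) :
    ∃ x, ∀ y, r x y := by
  have hdirected : Directed (· ⊇ ·) fun y => {x | r x y} := fun x y =>
    let ⟨z, hzx, hzy⟩ := hdir x y
    ⟨z, fun w hw => htrans w z x hw hzx, fun w hw => htrans w z y hw hzy⟩
  obtain ⟨x, hx⟩ := IsCompact.nonempty_iInter_of_directed_nonempty_isCompact_isClosed _ hdirected
    (fun y => let ⟨z, hz, _⟩ := hdir y y; ⟨z, hz⟩) (fun y => (hclosed y).isCompact) hclosed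
  exact ⟨x, mem_iInter.1 hx⟩

theorem exists_wedge_extremal {C : PointedCone ℝ (Fin 2 → ℝ)} (hC : C.toConvexCone.Salient)
    (hclosed : IsClosed (C : Set (Fin 2 → ℝ))) (hne : C ≠ ⊥) :
    ∃ u ∈ C, u ≠ 0 ∧ ∃ v ∈ C, v ≠ 0 ∧ ∀ x ∈ C, 0 ≤ wedge u x ∧ 0 ≤ wedge x v := by
  let S : Set (Fin 2 → ℝ) := C ∩ Metric.sphere 0 1
  have : CompactSpace S := isCompact_iff_compactSpace.1 ((isCompact_sphere 0 1).inter_left hclosed)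
  have ne_zero (x : S) : (x : Fin 2 → ℝ) ≠ 0 := Metric.ne_of_mem_sphere x.2.2 one_ne_zero
  have normalize_mem {x} (hx : x ∈ C) (hx0 : x ≠ 0) : ‖x‖⁻¹ • x ∈ S :=
    ⟨C.smul_mem (by positivity) hx, by simpa using norm_smul_inv_norm (𝕜 := ℝ) hx0⟩
  have : Nonempty S :=
    let ⟨_, hx, hx0⟩ := C.exists_mem_ne_zero_of_ne_bot hne
    ⟨_, normalize_mem hx hx0⟩
  have htrans (x y z : S) (hxy : 0 ≤ wedge x.1 y) (hyz : 0 ≤ wedge y.1 z) : 0 ≤ wedge x.1 z :=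
    wedge_nonneg_trans hC x.2.1 y.2.1 z.2.1 (ne_zero y) hxy hyz
  have htotal (x y : S) : 0 ≤ wedge x.1 y ∨ 0 ≤ wedge y.1 x := by
    rw [← neg_wedge x.1 y, neg_nonneg]
    exact le_total _ _
  have hself (x : S) : 0 ≤ wedge x.1 x := (wedge_self x.1).ge
  obtain ⟨u, hu⟩ := exists_forall_rel_of_compactSpace (r := fun x y : S => 0 ≤ wedge x.1 y) htrans
    (fun x y => (htotal x y).elim (fun h => ⟨x, hself x, h⟩) fun h => ⟨y, h, hself y⟩)
    (fun y => isClosed_Ici.preimage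
      ((wedge.flip y.1).continuous_of_finiteDimensional.comp continuous_subtype_val))
  obtain ⟨v, hv⟩ := exists_forall_rel_of_compactSpace (r := fun x y : S => 0 ≤ wedge y.1 x)
    (fun x y z hyx hzy => htrans z y x hzy hyx)
    (fun x y => (htotal x y).elim (fun h => ⟨y, h, hself y⟩) fun h => ⟨x, hself x, h⟩)
    (fun y => isClosed_Ici.preimage
      ((wedge y.1).continuous_of_finiteDimensional.comp continuous_subtype_val))
  refine ⟨u, u.2.1, ne_zero u, v, v.2.1, ne_zero v, fun x hx => ?_⟩
  obtain rfl | hx0 := eq_or_ne x 0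
  · simp
  · have hnorm : 0 < ‖x‖⁻¹ := by positivity
    have hux := hu ⟨_, normalize_mem hx hx0⟩
    have hxv := hv ⟨_, normalize_mem hx hx0⟩
    simp only [map_smul, LinearMap.smul_apply, smul_eq_mul] at hux hxv
    exact ⟨nonneg_of_mul_nonneg_right hux hnorm, nonneg_of_mul_nonneg_right hxv hnorm⟩

theorem pos_of_mem_interior_of_nonneg {E : Type*} [AddCommGroup E] [TopologicalSpace E]
    [ContinuousAdd E] [Module ℝ E] [ContinuousSMul ℝ E] {f : StrongDual ℝ E} (hf : f ≠ 0)
    {s : Set E} (hs : ∀ x ∈ s, 0 ≤ f x) {e : E} (he : e ∈ interior s) : 0 < f e := by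
  have hfe : f e ∈ interior (f '' s) :=
    (f.isOpenMap_of_ne_zero hf).image_interior_subset s (mem_image_of_mem f he)
  rw [← mem_Ioi, ← interior_Ici]
  exact interior_mono (image_subset_iff.2 hs) hfe

namespace IsProperCone

variable {m : ℕ} {K : Set (Fin m → ℝ)}

theorem smul_mem (hK : IsProperCone K) {a : ℝ} (ha : 0 ≤ a) {x : Fin m → ℝ} (hx : x ∈ K) :
    a • x ∈ K :=
  hK.1 a ha x hx

theorem add_mem (hK : IsProperCone K) {x y : Fin m → ℝ} (hx : x ∈ K) (hy : y ∈ K) : x + y ∈ K :=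
  hK.2.1 x hx y hy

theorem isClosed (hK : IsProperCone K) : IsClosed K :=
  hK.2.2.1

theorem inter_neg_eq (hK : IsProperCone K) : K ∩ (-K) = {0} :=
  hK.2.2.2.1

theorem interior_nonempty (hK : IsProperCone K) : (interior K).Nonempty :=
  hK.2.2.2.2

/-- A proper cone in the sense of `IsProperCone`, bundled as a Mathlib cone containing the origin
(which is what "pointed" means there; pointedness in the sense of `IsProperCone` is
`ConvexCone.Salient`). -/
def toPointedCone (hK : IsProperCone K) : PointedCone ℝ (Fin m → ℝ) where
  carrier := K
  add_mem' := hK.add_mem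
  zero_mem' := (hK.inter_neg_eq.ge rfl).1
  smul_mem' c _ := hK.smul_mem c.2

theorem salient_toPointedCone (hK : IsProperCone K) : hK.toPointedCone.toConvexCone.Salient :=
  hK.toPointedCone.salient_iff_inter_neg_eq_singleton.2 hK.inter_neg_eq

theorem toPointedCone_ne_bot [NeZero m] (hK : IsProperCone K) : hK.toPointedCone ≠ ⊥ := by
  intro hbot
  have hK0 : K = {0} := congrArg SetLike.coe hbot
  simpa [hK0] using hK.interior_nonempty

theorem exists_wedge_pos_extremal {K : Set (Fin 2 → ℝ)} (hK : IsProperCone K) :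
    ∃ u ∈ K, ∃ v ∈ K, 0 < wedge u v ∧ ∀ x ∈ K, 0 ≤ wedge u x ∧ 0 ≤ wedge x v := by
  obtain ⟨u, hu, hu0, v, hv, hv0, huv⟩ :=
    exists_wedge_extremal hK.salient_toPointedCone hK.isClosed hK.toPointedCone_ne_bot
  obtain ⟨e, he⟩ := hK.interior_nonempty
  have wedge_pos {w : Fin 2 → ℝ} (hw : w ≠ 0) (hwK : ∀ x ∈ K, 0 ≤ wedge w x) : 0 < wedge w e :=
    pos_of_mem_interior_of_nonneg (f := (wedge w).toContinuousLinearMap)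
      (by simpa using wedge_ne_zero hw) hwK he
  have hue : 0 < wedge u e := wedge_pos hu0 fun x hx => (huv x hx).1
  have hev : 0 < wedge e v := by
    rw [← neg_wedge, ← LinearMap.neg_apply, ← map_neg]
    refine wedge_pos (neg_ne_zero.2 hv0) fun x hx => ?_
    rw [map_neg, LinearMap.neg_apply, neg_wedge]
    exact (huv x hx).2
  refine ⟨u, hu, v, hv, ((huv v hv).1.lt_of_ne' fun huv0 => ?_), huv⟩
  have hsum : wedge e v • u + wedge u e • v = 0 := by
    rw [← wedge_smul_eq_add, huv0, zero_smul]
  refine hK.salient_toPointedCone (wedge e v • u) (hK.smul_mem hev.le hu)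
    (smul_ne_zero hev.ne' hu0) ?_
  rw [neg_eq_of_add_eq_zero_right hsum]
  exact hK.smul_mem hue.le hv

end IsProperCone

/-- A real `2×2` matrix has an invariant proper cone iff
`(trace A)² ≥ 4 det A` and `trace A ≥ 0`. -/
theorem exists_invariant_proper_cone_iff (A : Matrix (Fin 2) (Fin 2) ℝ) :
    (∃ K : Set (Fin 2 → ℝ), IsProperCone K ∧ InvariantUnder A K) ↔
      (A.trace ^ 2 ≥ 4 * A.det ∧ 0 ≤ A.trace) := by
  rw [ge_iff_le, ← sub_nonneg, ← discr_fin_two]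
  constructor
  · rintro ⟨K, hK, hA⟩
    obtain ⟨u, hu, v, hv, huv, hextremal⟩ := hK.exists_wedge_pos_extremal
    obtain ⟨huAu, hAuv⟩ := hextremal _ (hA u hu)
    obtain ⟨huAv, hAvv⟩ := hextremal _ (hA v hv)
    exact ⟨discr_nonneg_of_wedge_nonneg huv huAu hAvv, trace_nonneg_of_wedge_nonneg huv hAuv huAv⟩
  · rintro ⟨hdiscr, htrace⟩
    obtain ⟨P, N, hP, hN, hPA⟩ := exists_isUnit_mul_eq_nonneg_mul hdiscr htrace
    exact exists_isProperCone_invariantUnder_of_mul_eq hP hN hPA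
end

section
/- Let A be a real 2×2 diagonalizable matrix with eigenvalues λ₁ > λ₂ ≥ 0. A proper cone K ⊆ ℝ² is A-invariant if and only if K contains an eigenvector of A corresponding to λ₁ and the interior of K contains no eigenvector of A corresponding to λ₂. -/
/-!
If the `μ₂`-eigenspace of `f` is a hyperplane and `u` is an eigenvector for `μ₁ > μ₂ ≥ 0`, then
`f x = μ₂ • x + φ x • u` for a functional `φ` with kernel that hyperplane and `φ u = μ₁ - μ₂ > 0`.
Power iteration sends `x` to a positive multiple of `φ x • u`, so a closed convex cone is
`f`-invariant if and only if it is invariant under the rank one map `x ↦ φ x • u`. For a salient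
cone containing `u` this says that `φ` is nonnegative on the cone, that is, that its kernel does
not meet the interior.
-/

open Filter Module Set Topology

section Sign

theorem nonneg_of_mem_closure_of_forall_ne_zero {X α : Type*} [TopologicalSpace X]
    [LinearOrder α] [TopologicalSpace α] [OrderClosedTopology α] [Zero α] {s : Set X} {g : X → α}
    {x y : X} (hs : IsPreconnected s) (hg : Continuous g) (hne : ∀ z ∈ s, g z ≠ 0)
    (hx : x ∈ closure s) (hgx : 0 < g x) (hy : y ∈ closure s) : 0 ≤ g y := by
  by_contra! hgy
  obtain ⟨p, hp, hps⟩ := mem_closure_iff.1 hx _ (isOpen_lt continuous_const hg) hgx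
  obtain ⟨q, hq, hqs⟩ := mem_closure_iff.1 hy _ (isOpen_lt hg continuous_const) hgy
  obtain ⟨z, hz, hgz⟩ := hs.intermediate_value hqs hps hg.continuousOn ⟨hq.le, hp.le⟩
  exact hne z hz hgz

variable {E : Type*} [AddCommGroup E] [Module ℝ E] [TopologicalSpace E]
  [ContinuousSMul ℝ E] {s : Set E} {φ : E →L[ℝ] ℝ}

theorem pos_of_mem_interior_of_forall_nonneg [ContinuousAdd E] (hφ : φ ≠ 0)
    (h : ∀ x ∈ s, 0 ≤ φ x) {x : E} (hx : x ∈ interior s) : 0 < φ x := by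
  have hx' : x ∈ interior (φ ⁻¹' Ici 0) := interior_mono h hx
  rwa [← (φ.isOpenMap_of_ne_zero hφ).preimage_interior_eq_interior_preimage φ.continuous,
    interior_Ici] at hx'

theorem exists_mem_apply_ne_zero [ContinuousAdd E] (hφ : φ ≠ 0)
    (hs : (interior s).Nonempty) : ∃ x ∈ s, φ x ≠ 0 := by
  by_contra! h
  obtain ⟨x, hx⟩ := hs
  exact (pos_of_mem_interior_of_forall_nonneg hφ (fun y hy ↦ (h y hy).ge) hx).ne'
    (h x (interior_subset hx))

theorem forall_nonneg_iff_forall_mem_interior_ne_zero [IsTopologicalAddGroup E]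
    (hs : Convex ℝ s) (hne : (interior s).Nonempty) {u : E} (hu : u ∈ s) (hφu : 0 < φ u) :
    (∀ x ∈ s, 0 ≤ φ x) ↔ ∀ v ∈ interior s, φ v ≠ 0 := by
  have hφ : φ ≠ 0 := by rintro rfl; simp at hφu
  have hsub : s ⊆ closure (interior s) := by
    rw [hs.closure_interior_eq_closure_of_nonempty_interior hne]
    exact subset_closure
  refine ⟨fun h v hv ↦ (pos_of_mem_interior_of_forall_nonneg hφ h hv).ne', fun h x hx ↦ ?_⟩
  exact nonneg_of_mem_closure_of_forall_ne_zero hs.interior.isPreconnected φ.continuous h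
    (hsub hu) hφu (hsub hx)

end Sign

section SalientCone

theorem smul_mem_iff_nonneg_of_salient {R V : Type*} [Ring R] [IsDomain R] [LinearOrder R]
    [IsOrderedRing R] [AddCommGroup V] [Module R V] [IsTorsionFree R V]
    {C : PointedCone R V} (hC : (C : ConvexCone R V).Salient) {u : V} (hu : u ∈ C)
    (hu₀ : u ≠ 0) {c : R} : c • u ∈ C ↔ 0 ≤ c := by
  refine ⟨fun h ↦ ?_, fun hc ↦ C.smul_mem hc hu⟩
  by_contra! hc
  refine hC (c • u) h (smul_ne_zero hc.ne hu₀) ?_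
  rw [← neg_smul]
  exact C.smul_mem (neg_pos.2 hc).le hu

theorem zero_notMem_interior_of_salient {E : Type*} [AddCommGroup E] [Module ℝ E]
    [TopologicalSpace E] [ContinuousSMul ℝ E] {C : PointedCone ℝ E}
    (hC : (C : ConvexCone ℝ E).Salient) {u : E} (hu : u ∈ C) (hu₀ : u ≠ 0) :
    (0 : E) ∉ interior (C : Set E) := by
  intro h
  have hlim : Tendsto (fun t : ℝ ↦ t • u) (𝓝[<] 0) (𝓝 0) := by
    have hcont : Continuous fun t : ℝ ↦ t • u := by fun_prop
    simpa using (hcont.tendsto 0).mono_left nhdsWithin_le_nhds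
  obtain ⟨t, htC, ht⟩ :=
    ((hlim.eventually_mem (mem_interior_iff_mem_nhds.1 h)).and self_mem_nhdsWithin).exists
  exact ((smul_mem_iff_nonneg_of_salient hC hu hu₀).1 htC).not_gt ht

end SalientCone

section Invariance

variable {E : Type*} [AddCommGroup E] [Module ℝ E] [TopologicalSpace E] {C : ProperCone ℝ E}

theorem mem_of_add_mem_of_mapsTo_of_abs_lt [ContinuousAdd E] [ContinuousSMul ℝ E] {f : End ℝ E}
    (hf : MapsTo f C C) {μ₁ μ₂ : ℝ} (hμ : |μ₂| < μ₁) {p w : E} (hp : f p = μ₁ • p)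
    (hw : f w = μ₂ • w) (hpw : p + w ∈ C) : p ∈ C := by
  have hμ₁ : 0 < μ₁ := (abs_nonneg μ₂).trans_lt hμ
  have hmem (n : ℕ) : p + (μ₂ / μ₁) ^ n • w ∈ C := by
    induction n with
    | zero => simpa using hpw
    | succ n ih =>
      have hstep : μ₁⁻¹ • f (p + (μ₂ / μ₁) ^ n • w) = p + (μ₂ / μ₁) ^ (n + 1) • w := by
        rw [map_add, map_smul, hp, hw, smul_add, inv_smul_smul₀ hμ₁.ne', smul_smul, smul_smul]
        ring_nf
      exact hstep ▸ C.smul_mem (hf ih) (inv_nonneg.2 hμ₁.le)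
  have hratio : |μ₂ / μ₁| < 1 := by rwa [abs_div, abs_of_pos hμ₁, div_lt_one hμ₁]
  have hlim : Tendsto (fun n : ℕ ↦ p + (μ₂ / μ₁) ^ n • w) atTop (𝓝 p) := by
    simpa using ((tendsto_pow_atTop_nhds_zero_of_abs_lt_one hratio).smul_const w).const_add p
  exact C.isClosed.mem_of_tendsto hlim (.of_forall hmem)

theorem mapsTo_iff_forall_smul_mem [ContinuousAdd E] [ContinuousSMul ℝ E] {f : End ℝ E}
    {φ : Dual ℝ E} {u : E} {μ : ℝ} (hf : ∀ x, f x = μ • x + φ x • u) (hμ : 0 ≤ μ)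
    (hφu : 0 < φ u) : MapsTo f C C ↔ ∀ x ∈ C, φ x • u ∈ C := by
  refine ⟨fun h x hx ↦ ?_, fun h x hx ↦ ?_⟩
  · let p := (φ x / φ u) • u
    have hφp : φ p = φ x := by simp [p, hφu.ne']
    have hp : f p = (μ + φ u) • p := by
      rw [hf, hφp, add_smul, smul_smul (φ u), mul_div_cancel₀ _ hφu.ne']
    have hxp : f (x - p) = μ • (x - p) := by simp [hf, hφp]
    have hpC : p ∈ C := mem_of_add_mem_of_mapsTo_of_abs_lt h
      (by rw [abs_of_nonneg hμ]; linarith) hp hxp (by rwa [add_sub_cancel])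
    have hscale : φ u • p = φ x • u := by rw [smul_smul, mul_div_cancel₀ _ hφu.ne']
    exact hscale ▸ C.smul_mem hpC hφu.le
  · rw [hf]
    exact C.add_mem (C.smul_mem hx hμ) (h x hx)

theorem mapsTo_iff_forall_mem_interior_ne_zero [IsTopologicalAddGroup E] [ContinuousSMul ℝ E]
    (hsal : (C : ConvexCone ℝ E).Salient) (hsol : (interior (C : Set E)).Nonempty)
    {f : End ℝ E} {φ : E →L[ℝ] ℝ} {u : E} {μ : ℝ} (hf : ∀ x, f x = μ • x + φ x • u)
    (hμ : 0 ≤ μ) (hφu : 0 < φ u) (hu : u ∈ C) :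
    MapsTo f C C ↔ ∀ v ∈ interior (C : Set E), φ v ≠ 0 := by
  have hu₀ : u ≠ 0 := by rintro rfl; simp at hφu
  calc
    MapsTo f C C ↔ ∀ x ∈ C, φ x • u ∈ C :=
      mapsTo_iff_forall_smul_mem (φ := φ.toLinearMap) hf hμ hφu
    _ ↔ ∀ x ∈ C, 0 ≤ φ x :=
      forall₂_congr fun _ _ ↦ smul_mem_iff_nonneg_of_salient hsal hu hu₀
    _ ↔ ∀ v ∈ interior (C : Set E), φ v ≠ 0 :=
      forall_nonneg_iff_forall_mem_interior_ne_zero C.convex hsol hu hφu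

end Invariance

section Eigenspace

theorem isCoatom_of_finrank_eq_two {𝕜 V : Type*} [DivisionRing 𝕜] [AddCommGroup V]
    [Module 𝕜 V] (hV : finrank 𝕜 V = 2) {p : Submodule 𝕜 V} (hbot : p ≠ ⊥) (htop : p ≠ ⊤) :
    IsCoatom p := by
  have : FiniteDimensional 𝕜 V := .of_finrank_pos (by omega)
  refine ⟨htop, fun q hpq ↦ Submodule.eq_top_of_finrank_eq ?_⟩
  have hp : 1 ≤ finrank 𝕜 p := Submodule.one_le_finrank_iff.2 hbot
  have hlt := Submodule.finrank_lt_finrank_of_lt hpq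
  have hq := q.finrank_le
  omega

theorem notMem_eigenspace_of_hasEigenvector {R M : Type*} [CommRing R] [IsDomain R]
    [AddCommGroup M] [Module R M] [IsTorsionFree R M] {f : End R M} {μ₁ μ₂ : R} {u : M}
    (hμ : μ₁ ≠ μ₂) (hu : f.HasEigenvector μ₁ u) : u ∉ f.eigenspace μ₂ := fun h ↦
  hu.2 <| (f.disjoint_genEigenspace hμ 1 1).le_bot ⟨hu.1, h⟩

theorem sub_smul_mem_span_of_isCoatom_eigenspace {𝕜 V : Type*} [Field 𝕜] [AddCommGroup V]
    [Module 𝕜 V] {f : End 𝕜 V} {μ₁ μ₂ : 𝕜} {u : V} (hμ : μ₁ ≠ μ₂)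
    (hH : IsCoatom (f.eigenspace μ₂)) (hu : f.HasEigenvector μ₁ u) (x : V) :
    f x - μ₂ • x ∈ Submodule.span 𝕜 {u} := by
  have hsup : f.eigenspace μ₂ ⊔ Submodule.span 𝕜 {u} = ⊤ :=
    hH.2 _ <| left_lt_sup.2 fun h ↦ notMem_eigenspace_of_hasEigenvector hμ hu
      (h (Submodule.mem_span_singleton_self u))
  obtain ⟨w, hw, y, hy, rfl⟩ := Submodule.mem_sup.1 (hsup.symm ▸ Submodule.mem_top (x := x))
  obtain ⟨c, rfl⟩ := Submodule.mem_span_singleton.1 hy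
  refine Submodule.mem_span_singleton.2 ⟨c * (μ₁ - μ₂), ?_⟩
  rw [map_add, map_smul, End.mem_eigenspace_iff.1 hw, hu.apply_eq_smul]
  module

theorem exists_apply_eq_smul_add_smul_of_isCoatom_eigenspace {𝕜 E : Type*}
    [NontriviallyNormedField 𝕜] [CompleteSpace 𝕜] [AddCommGroup E] [Module 𝕜 E]
    [TopologicalSpace E] [IsTopologicalAddGroup E] [ContinuousSMul 𝕜 E] [T2Space E]
    {f : End 𝕜 E} (hf : Continuous f) {μ₁ μ₂ : 𝕜} {u : E} (hμ : μ₁ ≠ μ₂)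
    (hH : IsCoatom (f.eigenspace μ₂)) (hu : f.HasEigenvector μ₁ u) :
    ∃ φ : E →L[𝕜] 𝕜, φ u = μ₁ - μ₂ ∧ ∀ x, f x = μ₂ • x + φ x • u := by
  let coord : Submodule.span 𝕜 {u} →L[𝕜] 𝕜 :=
    (LinearEquiv.toSpanNonzeroSingleton 𝕜 E u hu.2).symm.toLinearMap.toContinuousLinearMap
  let g : E →L[𝕜] Submodule.span 𝕜 {u} :=
    (⟨f, hf⟩ - μ₂ • .id 𝕜 E : E →L[𝕜] E).codRestrict _
      (sub_smul_mem_span_of_isCoatom_eigenspace hμ hH hu)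
  have hg (x : E) : coord (g x) • u = f x - μ₂ • x :=
    LinearEquiv.toSpanNonzeroSingleton_symm_apply_smul 𝕜 E u hu.2 (g x)
  refine ⟨coord.comp g, smul_left_injective 𝕜 hu.2 ?_, fun x ↦ ?_⟩
  · have hfu : f u = μ₁ • u := hu.apply_eq_smul
    simp only [ContinuousLinearMap.comp_apply, hg, hfu, sub_smul]
  · rw [ContinuousLinearMap.comp_apply, hg, add_sub_cancel]

theorem isCoatom_eigenspace_of_finrank_eq_two {𝕜 V : Type*} [Field 𝕜] [AddCommGroup V]
    [Module 𝕜 V] (hV : finrank 𝕜 V = 2) {f : End 𝕜 V} {μ₁ μ₂ : 𝕜} (hμ : μ₁ ≠ μ₂)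
    (h₁ : f.HasEigenvalue μ₁) (h₂ : f.HasEigenvalue μ₂) : IsCoatom (f.eigenspace μ₂) := by
  obtain ⟨u, hu⟩ := h₁.exists_hasEigenvector
  exact isCoatom_of_finrank_eq_two hV h₂ fun htop ↦
    notMem_eigenspace_of_hasEigenvector hμ hu (htop ▸ Submodule.mem_top)

end Eigenspace

section DominantEigenvector

variable {E : Type*} [AddCommGroup E] [Module ℝ E] [TopologicalSpace E] [IsTopologicalAddGroup E]
  [ContinuousSMul ℝ E] [T2Space E] {f : End ℝ E} {μ₁ μ₂ : ℝ} {C : ProperCone ℝ E}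

theorem exists_hasEigenvector_mem_of_mapsTo (hf : Continuous f) (hlt : μ₂ < μ₁) (hμ₂ : 0 ≤ μ₂)
    (h₁ : f.HasEigenvalue μ₁) (h₂ : IsCoatom (f.eigenspace μ₂))
    (hsol : (interior (C : Set E)).Nonempty) (h : MapsTo f C C) :
    ∃ u, f.HasEigenvector μ₁ u ∧ u ∈ C := by
  obtain ⟨u, hu⟩ := h₁.exists_hasEigenvector
  obtain ⟨φ, hφu, hfφ⟩ := exists_apply_eq_smul_add_smul_of_isCoatom_eigenspace hf hlt.ne' h₂ hu
  have hφu_pos : 0 < φ u := hφu ▸ sub_pos.2 hlt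
  have hφ : φ ≠ 0 := by rintro rfl; simp at hφu_pos
  obtain ⟨x, hx, hφx⟩ := exists_mem_apply_ne_zero hφ hsol
  exact ⟨φ x • u, ⟨Submodule.smul_mem _ _ hu.1, smul_ne_zero hφx hu.2⟩,
    (mapsTo_iff_forall_smul_mem (φ := φ.toLinearMap) hfφ hμ₂ hφu_pos).1 h x hx⟩

theorem mapsTo_iff_forall_hasEigenvector_notMem_interior (hf : Continuous f) (hlt : μ₂ < μ₁)
    (hμ₂ : 0 ≤ μ₂) (h₂ : IsCoatom (f.eigenspace μ₂)) (hsal : (C : ConvexCone ℝ E).Salient)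
    (hsol : (interior (C : Set E)).Nonempty) {u : E} (hu : f.HasEigenvector μ₁ u) (huC : u ∈ C) :
    MapsTo f C C ↔ ∀ v, f.HasEigenvector μ₂ v → v ∉ interior (C : Set E) := by
  obtain ⟨φ, hφu, hfφ⟩ := exists_apply_eq_smul_add_smul_of_isCoatom_eigenspace hf hlt.ne' h₂ hu
  have hker (v : E) : v ∈ f.eigenspace μ₂ ↔ φ v = 0 := by simp [hfφ, hu.2]
  rw [mapsTo_iff_forall_mem_interior_ne_zero hsal hsol hfφ hμ₂ (hφu ▸ sub_pos.2 hlt) huC]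
  refine ⟨fun h v hv hvC ↦ h v hvC ((hker v).1 hv.1), fun h v hvC hφv ↦ ?_⟩
  have hv₀ : v ≠ 0 := by
    rintro rfl
    exact zero_notMem_interior_of_salient hsal huC hu.2 hvC
  exact h v ⟨(hker v).2 hφv, hv₀⟩ hvC

theorem invariant_iff_of_diagonalizable_nonneg_eigenvalues_general (hf : Continuous f)
    (hlt : μ₂ < μ₁) (hμ₂ : 0 ≤ μ₂) (h₁ : f.HasEigenvalue μ₁) (h₂ : IsCoatom (f.eigenspace μ₂))
    (hsal : (C : ConvexCone ℝ E).Salient) (hsol : (interior (C : Set E)).Nonempty) :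
    MapsTo f C C ↔ (∃ u, f.HasEigenvector μ₁ u ∧ u ∈ C) ∧
      ∀ v, f.HasEigenvector μ₂ v → v ∉ interior (C : Set E) := by
  have hiff {u : E} (hu : f.HasEigenvector μ₁ u) (huC : u ∈ C) :=
    mapsTo_iff_forall_hasEigenvector_notMem_interior hf hlt hμ₂ h₂ hsal hsol hu huC
  constructor
  · intro h
    obtain ⟨u, hu, huC⟩ := exists_hasEigenvector_mem_of_mapsTo hf hlt hμ₂ h₁ h₂ hsol h
    exact ⟨⟨u, hu, huC⟩, (hiff hu huC).1 h⟩
  · rintro ⟨⟨u, hu, huC⟩, h⟩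
    exact (hiff hu huC).2 h

end DominantEigenvector

namespace IsProperCone

variable {m : ℕ} {K : Set (Fin m → ℝ)}

/-- A set satisfying `IsProperCone`, as a bundled `ProperCone`. The bundled notion only
asks for a closed convex cone, so that `K ∩ -K = {0}` and solidity are lost. -/
def toProperCone (hK : IsProperCone K) : ProperCone ℝ (Fin m → ℝ) where
  carrier := K
  add_mem' {x y} hx hy := hK.2.1 x hx y hy
  zero_mem' := (hK.2.2.2.1.symm ▸ mem_singleton 0 : (0 : Fin m → ℝ) ∈ K ∩ -K).1
  smul_mem' c x hx := hK.1 c c.2 x hx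
  isClosed' := hK.2.2.1

theorem coe_toProperCone (hK : IsProperCone K) : (hK.toProperCone : Set (Fin m → ℝ)) = K := rfl

theorem mem_toProperCone (hK : IsProperCone K) {x : Fin m → ℝ} : x ∈ hK.toProperCone ↔ x ∈ K :=
  Iff.rfl

theorem salient_toProperCone (hK : IsProperCone K) :
    (hK.toProperCone : ConvexCone ℝ (Fin m → ℝ)).Salient :=
  PointedCone.salient_iff_inter_neg_eq_singleton _ |>.2 hK.2.2.2.1

end IsProperCone

theorem hasEigenvector_mulVecLin_iff {R n : Type*} [CommRing R] [Fintype n]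
    {A : Matrix n n R} {μ : R} {v : n → R} :
    End.HasEigenvector A.mulVecLin μ v ↔ v ≠ 0 ∧ A.mulVec v = μ • v := by
  rw [End.hasEigenvector_iff, End.mem_eigenspace_iff, Matrix.mulVecLin_apply, and_comm]

theorem mapsTo_mulVecLin_iff_invariantUnder {m : ℕ} {A : Matrix (Fin m) (Fin m) ℝ}
    {K : Set (Fin m → ℝ)} : MapsTo A.mulVecLin K K ↔ InvariantUnder A K :=
  Iff.rfl

theorem exists_hasEigenvector_iff_hasEigenvalue {R M : Type*} [CommRing R] [AddCommGroup M]
    [Module R M] {f : End R M} {μ : R} : (∃ u, f.HasEigenvector μ u) ↔ f.HasEigenvalue μ :=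
  ⟨fun ⟨_, hu⟩ ↦ End.hasEigenvalue_of_hasEigenvector hu, fun h ↦ h.exists_hasEigenvector⟩

/-- Theorem: for a diagonalizable real `2×2` matrix `A` with eigenvalues
`l₁ > l₂ ≥ 0` (diagonalizability being expressed by the existence of
eigenvectors for the two distinct eigenvalues), a proper cone `K` is
`A`-invariant iff `K` contains an eigenvector for `l₁` and the interior of
`K` contains no eigenvector for `l₂`. -/
theorem invariant_iff_of_diagonalizable_nonneg_eigenvalues
    (A : Matrix (Fin 2) (Fin 2) ℝ) (l₁ l₂ : ℝ)
    (hlt : l₂ < l₁) (hl₂ : 0 ≤ l₂)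
    (he₁ : ∃ u : Fin 2 → ℝ, u ≠ 0 ∧ A.mulVec u = l₁ • u)
    (he₂ : ∃ u : Fin 2 → ℝ, u ≠ 0 ∧ A.mulVec u = l₂ • u)
    (K : Set (Fin 2 → ℝ)) (hK : IsProperCone K) :
    InvariantUnder A K ↔
      (∃ u : Fin 2 → ℝ, u ≠ 0 ∧ A.mulVec u = l₁ • u ∧ u ∈ K) ∧
      (∀ v : Fin 2 → ℝ, v ≠ 0 → A.mulVec v = l₂ • v → v ∉ interior K) := by
  simp only [← hasEigenvector_mulVecLin_iff, exists_hasEigenvector_iff_hasEigenvalue] at he₁ he₂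
  have hcoatom := isCoatom_eigenspace_of_finrank_eq_two (by simp) hlt.ne' he₁ he₂
  simpa only [hasEigenvector_mulVecLin_iff, hK.coe_toProperCone, hK.mem_toProperCone,
    mapsTo_mulVecLin_iff_invariantUnder, and_assoc, and_imp] using
    invariant_iff_of_diagonalizable_nonneg_eigenvalues_general
      A.mulVecLin.continuous_of_finiteDimensional hlt hl₂ he₁ hcoatom
      hK.salient_toProperCone hK.2.2.2.2
end

section
/- Let A be a real 2×2 non-diagonalizable matrix with (necessarily real, repeated) eigenvalue λ ≥ 0. A proper cone K ⊆ ℝ² is A-invariant if and only if there exist an eigenvector u of A and a vector v ∈ ℝ² positively associated with u relative to A such that K = Cone{u, v}. -/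
/-- `coneGen X` is the smallest convex cone containing `X`. -/
def coneGen {m : ℕ} (X : Set (Fin m → ℝ)) : Set (Fin m → ℝ) :=
  ⋂₀ {K : Set (Fin m → ℝ) |
    (∀ a : ℝ, 0 ≤ a → ∀ x ∈ K, a • x ∈ K) ∧ (∀ x ∈ K, ∀ y ∈ K, x + y ∈ K) ∧ X ⊆ K}

/-- `A` is diagonalizable by a real similarity. -/
def IsDiagonalizable (A : Matrix (Fin 2) (Fin 2) ℝ) : Prop :=
  ∃ P : Matrix (Fin 2) (Fin 2) ℝ, IsUnit P.det ∧ (P⁻¹ * A * P).IsDiag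

/-!
The map `N := A - l` is nonzero and squares to zero, so its range is the eigenline of `A`.
If `l > 0`, then `l⁻ⁿ Aⁿ x = x + (n / l) N x`, so a closed cone invariant under `A` contains `N x`
along with `x`. Choose `p` in the cone with `u := N p ≠ 0`. Since the cone contains
`N (a u + b p) = b u` together with `a u + b p`, and is pointed, it lies on the side `b ≥ 0` of the
eigenline; one of its two boundary rays is therefore spanned by `u`, and the other by `p + t u` for
the least possible `t`.
-/

open Filter Module Polynomial Set
open scoped Matrix

theorem apply_apply_eq_zero_of_sq_eq_zero {R M : Type*} [Semiring R] [AddCommMonoid M] [Module R M]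
    {g : End R M} (hg : g ^ 2 = 0) (x : M) : g (g x) = 0 := by
  rw [← End.mul_apply, ← sq, hg, LinearMap.zero_apply]

section EndomorphismsOfPlanes

variable {k E : Type*} [Field k] [AddCommGroup E] [Module k E]

theorem exists_hasEigenvalue_ne_or_sq_sub_eq_zero (hE : finrank k E = 2) {f : End k E} {l : k}
    (hl : f.HasEigenvalue l) :
    (∃ m ≠ l, f.HasEigenvalue m) ∨ (f - algebraMap k (End k E) l) ^ 2 = 0 := by
  have : FiniteDimensional k E := .of_finrank_eq_succ hE
  obtain ⟨q, hq⟩ := dvd_iff_isRoot.2 ((f.hasEigenvalue_iff_isRoot_charpoly l).1 hl)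
  have hq_monic : q.Monic := (monic_X_sub_C l).of_mul_monic_left (hq ▸ f.charpoly_monic)
  have hq_deg : q.natDegree = 1 := by
    have h := f.charpoly_natDegree
    rw [hq, (monic_X_sub_C l).natDegree_mul hq_monic, natDegree_X_sub_C, hE] at h
    lia
  obtain ⟨m, rfl⟩ : ∃ m, q = X - C m :=
    ⟨-q.coeff 0, by rw [C_neg, sub_neg_eq_add]; exact hq_monic.eq_X_add_C hq_deg⟩
  rcases eq_or_ne m l with rfl | hml
  · right
    simpa [hq, sq] using f.aeval_self_charpoly
  · exact .inl ⟨m, hml, (f.hasEigenvalue_iff_isRoot_charpoly m).2 (by simp [hq])⟩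

theorem exists_eq_smul_add_smul_of_sq_eq_zero (hE : finrank k E = 2) {g : End k E}
    (hg : g ^ 2 = 0) {v : E} (hv : g v ≠ 0) (y : E) : ∃ a b : k, y = a • g v + b • v := by
  have hgg := apply_apply_eq_zero_of_sq_eq_zero hg
  have hindep : LinearIndependent k ![g v, v] := by
    rw [LinearIndependent.pair_iff]
    intro a b hab
    have hb : b = 0 := by simpa [hgg, hv] using congrArg g hab
    exact ⟨by simpa [hb, hv] using hab, hb⟩
  have hspan := hindep.span_eq_top_of_card_eq_finrank (by simp [hE])
  have hy : y ∈ Submodule.span k (range ![g v, v]) := hspan ▸ Submodule.mem_top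
  rw [Matrix.range_cons_cons_empty, Submodule.mem_span_pair] at hy
  obtain ⟨a, b, hab⟩ := hy
  exact ⟨a, b, hab.symm⟩

end EndomorphismsOfPlanes

section Diagonalization

variable {n k : Type*} [Fintype n] [DecidableEq n]

theorem inv_mul_mul_eq_diagonal_of_mulVec_col_eq [CommRing k] {A P : Matrix n n k} {μ : n → k}
    (hP : IsUnit P.det) (h : ∀ j, A *ᵥ P.col j = μ j • P.col j) :
    P⁻¹ * A * P = Matrix.diagonal μ := by
  have hAP : A * P = P * Matrix.diagonal μ := by
    ext i j
    simpa [Matrix.mul_diagonal, mul_comm] using! congrFun (h j) i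
  rw [mul_assoc, hAP, P.nonsing_inv_mul_cancel_left _ hP]

theorem exists_inv_mul_mul_eq_diagonal_of_hasEigenvalue [Field k] {A : Matrix n n k} {μ : n → k}
    (hμ : Function.Injective μ) (h : ∀ i, End.HasEigenvalue (Matrix.toLinAlgEquiv' A) (μ i)) :
    ∃ P : Matrix n n k, IsUnit P.det ∧ P⁻¹ * A * P = Matrix.diagonal μ := by
  choose v hv using fun i ↦ (h i).exists_hasEigenvector
  let P : Matrix n n k := (Matrix.of v)ᵀ
  have hP : IsUnit P.det := by
    rw [← Matrix.isUnit_iff_isUnit_det, ← Matrix.linearIndependent_cols_iff_isUnit]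
    exact End.eigenvectors_linearIndependent' _ μ hμ v hv
  exact ⟨P, hP, inv_mul_mul_eq_diagonal_of_mulVec_col_eq hP fun j ↦ (hv j).apply_eq_smul⟩

theorem isDiagonalizable_algebraMap (l : ℝ) : IsDiagonalizable (algebraMap ℝ _ l) :=
  ⟨1, by simp, by simp [Matrix.algebraMap_eq_diagonal]⟩

theorem sq_sub_algebraMap_eq_zero_of_not_isDiagonalizable {A : Matrix (Fin 2) (Fin 2) ℝ} {l : ℝ}
    (hA : ¬ IsDiagonalizable A) (hl : End.HasEigenvalue (Matrix.toLinAlgEquiv' A) l) :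
    (Matrix.toLinAlgEquiv' A - algebraMap ℝ (End ℝ _) l) ^ 2 = 0 := by
  refine (exists_hasEigenvalue_ne_or_sq_sub_eq_zero (by simp) hl).resolve_left ?_
  rintro ⟨m, hml, hm⟩
  obtain ⟨P, hP, hPA⟩ := exists_inv_mul_mul_eq_diagonal_of_hasEigenvalue (A := A) (μ := ![l, m])
    (by simpa [Function.Injective, Fin.forall_fin_two, eq_comm] using hml)
    (by simp only [Fin.forall_fin_two]; exact ⟨hl, hm⟩)
  exact hA ⟨P, hP, hPA ▸ Matrix.isDiag_diagonal _⟩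

end Diagonalization

theorem nonneg_of_smul_mem_of_neg_notMem {k E : Type*} [Field k] [LinearOrder k]
    [IsStrictOrderedRing k] [AddCommGroup E] [Module k E] {C : PointedCone k E} {q : E} {b : k}
    (hq : -q ∉ C) (hb : b • q ∈ C) : 0 ≤ b := by
  by_contra! hb_neg
  refine hq ((C.smul_mem_iff (neg_pos.2 hb_neg)).1 ?_)
  rwa [neg_smul_neg]

section ClosedCones

variable {E : Type*} [AddCommGroup E] [Module ℝ E] [TopologicalSpace E] [ContinuousAdd E]
  [ContinuousSMul ℝ E] {C : ProperCone ℝ E}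

theorem mem_of_frequently_add_smul_mem {p q : E} (h : ∃ᶠ t : ℝ in atTop, p + t • q ∈ C) :
    q ∈ C := by
  have hlim : Tendsto (fun t : ℝ ↦ t⁻¹ • p + q) atTop (nhds q) := by
    simpa using ((tendsto_inv_atTop_zero (𝕜 := ℝ)).smul_const p).add_const q
  refine C.isClosed.mem_of_frequently_of_tendsto ?_ hlim
  refine (h.and_eventually (eventually_gt_atTop 0)).mono fun t ⟨hmem, ht⟩ ↦ ?_
  have hscale : t⁻¹ • (p + t • q) = t⁻¹ • p + q := by rw [smul_add, inv_smul_smul₀ ht.ne']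
  exact hscale ▸ C.smul_mem hmem (inv_nonneg.2 ht.le)

theorem exists_isLeast_add_smul_mem {p q : E} (hp : p ∈ C) (hq : -q ∉ C) :
    ∃ t, IsLeast {t : ℝ | p + t • q ∈ C} t := by
  have hclosed : IsClosed {t : ℝ | p + t • q ∈ C} :=
    C.isClosed.preimage (f := fun t : ℝ ↦ p + t • q) (by fun_prop)
  refine ⟨_, hclosed.isLeast_csInf ⟨0, by simpa using hp⟩ ?_⟩
  by_contra hbdd
  refine hq (mem_of_frequently_add_smul_mem (C := C) (p := p) (frequently_atTop.2 fun a ↦ ?_))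
  obtain ⟨t, ht, hta⟩ := not_bddBelow_iff.1 hbdd (-a)
  exact ⟨-t, by linarith, by simpa using ht⟩

theorem mapsTo_iff_mapsTo_sub_algebraMap {f : End ℝ E} {l : ℝ} (hl : 0 ≤ l)
    (hf : (f - algebraMap ℝ _ l) ^ 2 = 0) :
    MapsTo f C C ↔ MapsTo (f - algebraMap ℝ (End ℝ E) l) C C := by
  obtain ⟨g, rfl⟩ : ∃ g, f = g + algebraMap ℝ _ l := ⟨f - algebraMap ℝ _ l, by simp⟩
  rw [add_sub_cancel_right] at hf ⊢
  have hgg := apply_apply_eq_zero_of_sq_eq_zero hf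
  refine ⟨fun h x hx ↦ ?_, fun h x hx ↦ C.add_mem (h hx) (C.smul_mem hx hl)⟩
  rcases hl.eq_or_lt with rfl | hl
  · simpa using h hx
  have hiter (n : ℕ) : x + (n : ℝ) • l⁻¹ • g x ∈ C := by
    induction n with
    | zero => simpa using hx
    | succ n ih =>
      have hstep : x + ((n + 1 : ℕ) : ℝ) • l⁻¹ • g x =
          l⁻¹ • (g + algebraMap ℝ _ l) (x + (n : ℝ) • l⁻¹ • g x) := by
        simp only [LinearMap.add_apply, map_add, map_smul, hgg, Module.algebraMap_end_apply]
        match_scalars <;> field_simp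
        ring
      exact hstep ▸ C.smul_mem (h ih) (inv_nonneg.2 hl.le)
  have hmem : l⁻¹ • g x ∈ C := mem_of_frequently_add_smul_mem <| frequently_atTop.2 fun a ↦
    (exists_nat_ge a).imp' _ fun n hn ↦ ⟨hn, hiter n⟩
  exact (C.toPointedCone.smul_mem_iff (inv_pos.2 hl)).1 hmem

theorem exists_mem_apply_ne_zero_of_nonempty_interior {g : End ℝ E} (hg : g ≠ 0) {s : Set E}
    (hs : (interior s).Nonempty) : ∃ x ∈ s, g x ≠ 0 := by
  contrapose! hg
  have hker : s ⊆ LinearMap.ker g := hg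
  exact LinearMap.ker_eq_top.1 <|
    Submodule.eq_top_of_nonempty_interior' _ (hs.mono (interior_mono hker))

theorem exists_eq_hull_pair_of_mapsTo (hE : finrank ℝ E = 2) {g : End ℝ E} (hg : g ^ 2 = 0)
    (hgC : MapsTo g C C) {p : E} (hp : p ∈ C) (hneg : -g p ∉ C) :
    ∃ v, g v = g p ∧ (C : PointedCone ℝ E) = .hull ℝ {g p, v} := by
  have hgg := apply_apply_eq_zero_of_sq_eq_zero hg
  have hgp : g p ≠ 0 := fun h ↦ hneg (by simp [h])
  obtain ⟨t, htC, ht_le⟩ := exists_isLeast_add_smul_mem hp hneg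
  have hgv : g (p + t • g p) = g p := by simp [hgg]
  refine ⟨p + t • g p, hgv, le_antisymm (fun y hy ↦ ?_)
    (Submodule.span_le.2 (pair_subset (hgC hp) htC))⟩
  obtain ⟨a, b, rfl⟩ := exists_eq_smul_add_smul_of_sq_eq_zero hE hg (hgv.trans_ne hgp) y
  rw [hgv] at hy ⊢
  have hb : 0 ≤ b := nonneg_of_smul_mem_of_neg_notMem (C := C.toPointedCone) hneg <| by
    simpa [hgg] using hgC hy
  have ha : 0 ≤ a := by
    rcases hb.eq_or_lt with rfl | hb
    · exact nonneg_of_smul_mem_of_neg_notMem (C := C.toPointedCone) hneg (by simpa using hy)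
    · have hmem : p + (t + b⁻¹ * a) • g p ∈ C := by
        have hscale : p + (t + b⁻¹ * a) • g p = b⁻¹ • (a • g p + b • (p + t • g p)) := by
          match_scalars <;> field_simp
          ring
        exact hscale ▸ C.smul_mem hy (inv_nonneg.2 hb.le)
      have hnonneg : 0 ≤ b⁻¹ * a := le_add_iff_nonneg_right t |>.1 (ht_le hmem)
      exact (mul_nonneg_iff_of_pos_left (inv_pos.2 hb)).1 hnonneg
  exact add_mem (PointedCone.smul_mem _ ha (PointedCone.subset_hull (by simp)))
    (PointedCone.smul_mem _ hb (PointedCone.subset_hull (by simp)))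

end ClosedCones

/-- `v` is positively associated with `u` relative to `f`: the invariant cones of `f` are spanned by
such pairs. The eigenvalue `l` is an explicit argument, and `u` need not be an eigenvector. -/
def IsPositivelyAssociated {E : Type*} [AddCommGroup E] [Module ℝ E] (f : End ℝ E) (l : ℝ)
    (v u : E) : Prop :=
  ∃ x : ℝ, 0 < x ∧ f v = l • v + x • u

theorem IsPositivelyAssociated.mapsTo_hull_pair {E : Type*} [AddCommGroup E] [Module ℝ E]
    {f : End ℝ E} {l : ℝ} {u v : E} (hv : IsPositivelyAssociated f l v u) (hl : 0 ≤ l)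
    (hu : f u = l • u) :
    MapsTo f (PointedCone.hull ℝ {u, v}) (PointedCone.hull ℝ {u, v}) := by
  obtain ⟨x, hx, hfv⟩ := hv
  have hu_mem : u ∈ PointedCone.hull ℝ {u, v} := PointedCone.subset_hull (by simp)
  have hv_mem : v ∈ PointedCone.hull ℝ {u, v} := PointedCone.subset_hull (by simp)
  have hle : PointedCone.hull ℝ {u, v} ≤ (PointedCone.hull ℝ {u, v}).comap f := by
    refine Submodule.span_le.2 (pair_subset ?_ ?_)
    · simpa [hu] using PointedCone.smul_mem _ hl hu_mem
    · simpa [hfv] using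
        add_mem (PointedCone.smul_mem _ hl hv_mem) (PointedCone.smul_mem _ hx.le hu_mem)
  exact hle

theorem mapsTo_iff_exists_eq_hull_pair {E : Type*} [AddCommGroup E] [Module ℝ E]
    [TopologicalSpace E] [ContinuousAdd E] [ContinuousSMul ℝ E] (hE : finrank ℝ E = 2)
    {f : End ℝ E} {l : ℝ} (hl : 0 ≤ l) (hf_ne : f ≠ algebraMap ℝ _ l)
    (hf : (f - algebraMap ℝ _ l) ^ 2 = 0) {C : ProperCone ℝ E}
    (hC : (C : ConvexCone ℝ E).Salient) (hC_int : (interior (C : Set E)).Nonempty) :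
    MapsTo f C C ↔ ∃ u v, f.HasEigenvector l u ∧ IsPositivelyAssociated f l v u ∧
      (C : PointedCone ℝ E) = .hull ℝ {u, v} := by
  constructor
  · intro hfC
    obtain ⟨p, hp, hp_ne⟩ :=
      exists_mem_apply_ne_zero_of_nonempty_interior (sub_ne_zero.2 hf_ne) hC_int
    have hNC := (mapsTo_iff_mapsTo_sub_algebraMap hl hf).1 hfC
    obtain ⟨v, hv, hCv⟩ := exists_eq_hull_pair_of_mapsTo hE hf hNC hp (hC _ (hNC hp) hp_ne)
    set u := (f - algebraMap ℝ _ l) p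
    have hu : f u - l • u = 0 := apply_apply_eq_zero_of_sq_eq_zero hf p
    have hv : f v - l • v = u := hv
    exact ⟨u, v, End.hasEigenvector_iff.2 ⟨End.mem_eigenspace_iff.2 (sub_eq_zero.1 hu), hp_ne⟩,
      ⟨1, one_pos, by rw [one_smul, ← hv, add_sub_cancel]⟩, hCv⟩
  · rintro ⟨u, v, hu, hv, hCuv⟩
    have hcoe : (C : Set E) = PointedCone.hull ℝ {u, v} := congrArg SetLike.coe hCuv
    exact hcoe ▸ hv.mapsTo_hull_pair hl hu.apply_eq_smul

theorem coneGen_eq_hull {m : ℕ} {X : Set (Fin m → ℝ)} (hX : X.Nonempty) :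
    coneGen X = PointedCone.hull ℝ X := by
  apply Subset.antisymm
  · exact sInter_subset_of_mem ⟨fun a ha x hx ↦ PointedCone.smul_mem _ ha hx,
      fun x hx y hy ↦ add_mem hx hy, PointedCone.subset_hull⟩
  · rintro x hx K ⟨hsmul, hadd, hXK⟩
    obtain ⟨y, hy⟩ := hX
    let K' : PointedCone ℝ (Fin m → ℝ) :=
      { carrier := K
        zero_mem' := by simpa using hsmul 0 le_rfl y (hXK hy)
        add_mem' := fun {x y} hx hy ↦ hadd x hx y hy
        smul_mem' := fun a x hx ↦ hsmul a a.2 x hx }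
    exact (Submodule.span_le (p := K')).2 hXK hx

theorem IsProperCone.exists_properCone {m : ℕ} {K : Set (Fin m → ℝ)} (hK : IsProperCone K) :
    ∃ C : ProperCone ℝ (Fin m → ℝ), (C : Set (Fin m → ℝ)) = K ∧
      (C : ConvexCone ℝ (Fin m → ℝ)).Salient ∧ (interior (C : Set (Fin m → ℝ))).Nonempty := by
  obtain ⟨hsmul, hadd, hclosed, hpointed, hsolid⟩ := hK
  have hzero : (0 : Fin m → ℝ) ∈ K ∩ -K := hpointed ▸ mem_singleton 0
  let C : ProperCone ℝ (Fin m → ℝ) :=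
    { carrier := K
      zero_mem' := hzero.1
      add_mem' := fun {x y} hx hy ↦ hadd x hx y hy
      smul_mem' := fun a x hx ↦ hsmul a a.2 x hx
      isClosed' := hclosed }
  have hC := (PointedCone.salient_iff_inter_neg_eq_singleton C.toPointedCone).2 hpointed
  exact ⟨C, rfl, hC, hsolid⟩

/-- Theorem: for a non-diagonalizable real `2×2` matrix `A` with eigenvalue
`l ≥ 0`, a proper cone `K` is `A`-invariant iff `K = Cone{u, v}` for some
eigenvector `u` of `A` and some `v` positively associated with `u`
relative to `A` (i.e. `A v = l v + x u` with `x > 0`). -/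
theorem invariant_iff_of_nondiagonalizable
    (A : Matrix (Fin 2) (Fin 2) ℝ) (l : ℝ) (hl : 0 ≤ l)
    (hnd : ¬ IsDiagonalizable A)
    (he : ∃ u : Fin 2 → ℝ, u ≠ 0 ∧ A.mulVec u = l • u)
    (K : Set (Fin 2 → ℝ)) (hK : IsProperCone K) :
    InvariantUnder A K ↔
      ∃ u v : Fin 2 → ℝ, (u ≠ 0 ∧ A.mulVec u = l • u) ∧
        (∃ x : ℝ, 0 < x ∧ A.mulVec v = l • v + x • u) ∧
        K = coneGen {u, v} := by
  obtain ⟨C, rfl, hC, hC_int⟩ := hK.exists_properCone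
  let f : End ℝ (Fin 2 → ℝ) := Matrix.toLinAlgEquiv' A
  have hvec (u : Fin 2 → ℝ) : f.HasEigenvector l u ↔ u ≠ 0 ∧ A.mulVec u = l • u := by
    rw [End.hasEigenvector_iff, End.mem_eigenspace_iff, and_comm]; rfl
  have hval : f.HasEigenvalue l := by
    obtain ⟨u, hu⟩ := he
    exact End.hasEigenvalue_of_hasEigenvector ((hvec u).2 hu)
  have hf_ne : f ≠ algebraMap ℝ _ l := fun h ↦
    hnd (Matrix.toLinAlgEquiv'.injective (h.trans (AlgEquiv.commutes _ l).symm) ▸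
      isDiagonalizable_algebraMap l)
  have hf := sq_sub_algebraMap_eq_zero_of_not_isDiagonalizable hnd hval
  have hmain := mapsTo_iff_exists_eq_hull_pair (finrank_fin_fun ℝ) hl hf_ne hf hC hC_int
  simp only [hvec, ← SetLike.coe_set_eq, ← coneGen_eq_hull (insert_nonempty _ _)] at hmain
  exact hmain
end

section
/- Let A be a real 2×2 non-diagonalizable matrix with eigenvalue λ ≥ 0, and let K ⊆ ℝ² be an A-invariant proper cone. Then K contains an eigenvector of A, and every eigenvector of A contained in K lies on the boundary of K (i.e., no eigenvector of A belongs to the interior of K). -/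
/-!
Put `N = A - l`. In dimension two, the eigenvectors of a non-diagonalizable `A` span a single line,
and by Cayley-Hamilton every `N x` is an eigenvector or zero, so `N ^ 2 = 0` while `N ≠ 0`.
Then `A ^ n x = l ^ n x + n l ^ (n - 1) N x`, and dividing by `n l ^ (n - 1)` and letting `n → ∞`
shows that `N` maps the closed cone `K` into itself (for `l = 0` this is the hypothesis).
Since `K` has interior, some `N x` with `x ∈ K` is a nonzero vector, hence an eigenvector in `K`.
If an eigenvector `u` were interior, then `N (u + w) = N w` and `N (u - w) = - N w` would both lie
in `K` for all small `w`, so pointedness would force `N = 0`.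
-/

open Filter Polynomial Set Topology

section Interior

variable {𝕜 E F : Type*} [NontriviallyNormedField 𝕜] [AddCommGroup E] [Module 𝕜 E]
  [TopologicalSpace E] [IsTopologicalAddGroup E] [ContinuousSMul 𝕜 E] [AddCommGroup F] [Module 𝕜 F]

theorem linearMap_eq_zero_of_eqOn_zero_of_interior_nonempty {N : E →ₗ[𝕜] F} {s : Set E}
    (hs : (interior s).Nonempty) (hN : ∀ x ∈ s, N x = 0) : N = 0 :=
  LinearMap.ker_eq_top.1 <| (LinearMap.ker N).eq_top_of_nonempty_interior' <|
    hs.mono <| interior_mono hN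

theorem linearMap_eq_zero_of_mapsTo_of_apply_eq_zero_of_mem_interior {N : E →ₗ[𝕜] F} {K : Set E}
    {C : Set F} (hC : C ∩ -C ⊆ {0}) (hN : MapsTo N K C) {u : E} (hu : u ∈ interior K)
    (hNu : N u = 0) : N = 0 := by
  have hK : K ∈ 𝓝 u := mem_interior_iff_mem_nhds.1 hu
  have h_add : ∀ᶠ w in 𝓝 (0 : E), u + w ∈ K :=
    (continuous_const_add u).tendsto' 0 u (add_zero u) hK
  have h_sub : ∀ᶠ w in 𝓝 (0 : E), u - w ∈ K :=
    (continuous_sub_left u).tendsto' 0 u (sub_zero u) hK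
  refine linearMap_eq_zero_of_eqOn_zero_of_interior_nonempty
    ⟨0, mem_interior_iff_mem_nhds.2 (h_add.and h_sub)⟩ fun w ⟨hw_add, hw_sub⟩ ↦ hC ⟨?_, ?_⟩
  · simpa [hNu] using hN hw_add
  · simpa [hNu] using hN hw_sub

end Interior

theorem mem_properCone_of_forall_add_nsmul_mem {E : Type*} [AddCommMonoid E] [Module ℝ E]
    [TopologicalSpace E] [ContinuousAdd E] [ContinuousSMul ℝ E] {C : ProperCone ℝ E} {x d : E}
    (h : ∀ n : ℕ, x + n • d ∈ C) : d ∈ C := by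
  have hlim : Tendsto (fun n : ℕ ↦ (n : ℝ)⁻¹ • x + d) atTop (𝓝 d) := by
    simpa using ((tendsto_inv_atTop_nhds_zero_nat (𝕜 := ℝ)).smul_const x).add_const d
  refine C.isClosed.mem_of_tendsto hlim ((eventually_ne_atTop 0).mono fun n hn ↦ ?_)
  have hscale : (n : ℝ)⁻¹ • (x + n • d) = (n : ℝ)⁻¹ • x + d := by
    rw [smul_add, ← Nat.cast_smul_eq_nsmul ℝ n d, inv_smul_smul₀ (Nat.cast_ne_zero.2 hn)]
  exact hscale ▸ C.smul_mem (h n) (by positivity)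

section Eigenvector

variable {R M : Type*} [CommRing R] [AddCommGroup M] [Module R M] {f : Module.End R M} {l : R}

theorem apply_sub_algebraMap_apply_of_sq_eq_zero (hsq : (f - algebraMap R _ l) ^ 2 = 0) (x : M) :
    f ((f - algebraMap R _ l) x) = l • (f - algebraMap R _ l) x := by
  have h := LinearMap.congr_fun hsq x
  rw [sq, Module.End.mul_apply] at h
  exact sub_eq_zero.1 h

theorem eq_of_hasEigenvector_of_isNilpotent_sub_algebraMap [IsDomain R] [Module.IsTorsionFree R M]
    {μ : R} {u : M} (hf : IsNilpotent (f - algebraMap R _ l)) (hu : f.HasEigenvector μ u) :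
    μ = l := by
  have hNu : (f - algebraMap R _ l).HasEigenvector (μ - l) u :=
    ⟨Module.End.mem_eigenspace_iff.2 (by simp [hu.apply_eq_smul, sub_smul]), hu.2⟩
  exact sub_eq_zero.1
    ((Module.End.hasEigenvalue_of_hasEigenvector hNu).isNilpotent_of_isNilpotent hf).eq_zero

end Eigenvector

section SquareZero

variable {E : Type*} [AddCommGroup E] [Module ℝ E] [TopologicalSpace E] [ContinuousSMul ℝ E]
  {T : Module.End ℝ E} {l : ℝ} {C : ProperCone ℝ E}

theorem mapsTo_sub_algebraMap_of_sq_eq_zero [ContinuousAdd E] (hl : 0 ≤ l)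
    (hsq : (T - algebraMap ℝ _ l) ^ 2 = 0) (hT : MapsTo T C C) :
    MapsTo (T - algebraMap ℝ (Module.End ℝ E) l) C C := by
  intro x hx
  rcases hl.eq_or_lt with rfl | hl
  · simpa using hT hx
  set d := (T - algebraMap ℝ _ l) x with hd
  have hTd : T d = l • d := apply_sub_algebraMap_apply_of_sq_eq_zero hsq x
  have hTx : T x = l • x + d := by simp [hd]
  refine mem_properCone_of_forall_add_nsmul_mem (x := l • x) fun n ↦ ?_
  induction n with
  | zero => simpa using C.smul_mem hx hl.le
  | succ n ih =>
    have hstep : l⁻¹ • T (l • x + n • d) = l • x + (n + 1) • d := by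
      rw [inv_smul_eq_iff₀ hl.ne', map_add, map_smul, map_nsmul, hTx, hTd]
      module
    exact hstep ▸ C.smul_mem (hT ih) (inv_nonneg.2 hl.le)

theorem eigenvector_on_boundary_of_nondiagonalizable_general [IsTopologicalAddGroup E]
    (hl : 0 ≤ l) (hsq : (T - algebraMap ℝ _ l) ^ 2 = 0) (hne : T ≠ algebraMap ℝ _ l)
    (hpointed : (C ∩ -C : Set E) = {0}) (hsolid : (interior (C : Set E)).Nonempty)
    (hT : MapsTo T C C) :
    (∃ u ∈ C, T.HasEigenvector l u) ∧
      ∀ μ u, T.HasEigenvector μ u → u ∉ interior (C : Set E) := by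
  have hN : T - algebraMap ℝ _ l ≠ 0 := sub_ne_zero.2 hne
  have hNC : MapsTo (T - algebraMap ℝ (Module.End ℝ E) l) C C :=
    mapsTo_sub_algebraMap_of_sq_eq_zero hl hsq hT
  constructor
  · obtain ⟨x, hx, hNx⟩ : ∃ x ∈ C, (T - algebraMap ℝ _ l) x ≠ 0 := by
      by_contra! h
      exact hN (linearMap_eq_zero_of_eqOn_zero_of_interior_nonempty hsolid h)
    exact ⟨_, hNC hx, Module.End.mem_eigenspace_iff.2
      (apply_sub_algebraMap_apply_of_sq_eq_zero hsq x), hNx⟩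
  · intro μ u hu hu_int
    obtain rfl : μ = l := eq_of_hasEigenvector_of_isNilpotent_sub_algebraMap ⟨2, hsq⟩ hu
    exact hN <| linearMap_eq_zero_of_mapsTo_of_apply_eq_zero_of_mem_interior hpointed.subset hNC
      hu_int (sub_eq_zero.2 hu.apply_eq_smul)

end SquareZero

theorem charpoly_fin_two_eq_mul_of_isRoot {R : Type*} [CommRing R]
    {A : Matrix (Fin 2) (Fin 2) R} {l : R} (hl : A.charpoly.IsRoot l) :
    A.charpoly = (X - C (A.trace - l)) * (X - C l) := by
  nontriviality R
  have hdet : A.det = (A.trace - l) * l := by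
    have h := hl.eq_zero
    simp only [A.charpoly_fin_two, eval_add, eval_sub, eval_mul, eval_pow, eval_X, eval_C] at h
    linear_combination h
  rw [A.charpoly_fin_two, hdet]
  simp only [C_mul, C_sub]
  ring

section Diagonalizable

variable {A : Matrix (Fin 2) (Fin 2) ℝ}

theorem isDiagonalizable_of_linearIndependent {v : Fin 2 → Fin 2 → ℝ} {μ : Fin 2 → ℝ}
    (hv : LinearIndependent ℝ v) (hAv : ∀ j, A.mulVec (v j) = μ j • v j) :
    IsDiagonalizable A := by
  set P : Matrix (Fin 2) (Fin 2) ℝ := (Matrix.of v).transpose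
  have hP : IsUnit P.det :=
    (Matrix.isUnit_iff_isUnit_det P).1 (Matrix.linearIndependent_cols_iff_isUnit.1 hv)
  have hAP : A * P = P * Matrix.diagonal μ := by
    ext i j
    rw [Matrix.mul_diagonal, mul_comm]
    exact congrFun (hAv j) i
  refine ⟨P, hP, ?_⟩
  rw [Matrix.mul_assoc, hAP, Matrix.nonsing_inv_mul_cancel_left _ _ hP]
  exact Matrix.isDiag_diagonal μ

theorem exists_smul_eq_of_not_isDiagonalizable (hA : ¬ IsDiagonalizable A) {u v : Fin 2 → ℝ}
    {a b : ℝ} (hu : Module.End.HasEigenvector A.toLin' a u) (hv : A.mulVec v = b • v) :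
    ∃ s : ℝ, s • u = v := by
  by_contra! h
  refine hA (isDiagonalizable_of_linearIndependent (μ := ![a, b])
    ((LinearIndependent.pair_iff' hu.2).2 h) (Fin.forall_fin_two.2 ⟨?_, hv⟩))
  exact hu.apply_eq_smul

theorem toLin'_sub_algebraMap_sq_eq_zero_of_not_isDiagonalizable (hA : ¬ IsDiagonalizable A)
    {l : ℝ} (hl : Module.End.HasEigenvalue A.toLin' l) :
    (A.toLin' - algebraMap ℝ _ l) ^ 2 = 0 := by
  have hroot : A.charpoly.IsRoot l := by
    rwa [← Matrix.charpoly_toLin', ← Module.End.hasEigenvalue_iff_isRoot_charpoly]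
  have hCH : (A.toLin' - algebraMap ℝ _ (A.trace - l)) * (A.toLin' - algebraMap ℝ _ l) = 0 := by
    simpa only [Matrix.charpoly_toLin', charpoly_fin_two_eq_mul_of_isRoot hroot, map_mul,
      map_sub, aeval_X, aeval_C] using A.toLin'.aeval_self_charpoly
  obtain ⟨u, hu⟩ := hl.exists_hasEigenvector
  refine LinearMap.ext fun x ↦ ?_
  set y := (A.toLin' - algebraMap ℝ _ l) x with hy
  have hAy : A.mulVec y = (A.trace - l) • y := sub_eq_zero.1 (LinearMap.congr_fun hCH x)
  obtain ⟨s, hs⟩ := exists_smul_eq_of_not_isDiagonalizable hA hu hAy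
  have hNu : (A.toLin' - algebraMap ℝ _ l) u = 0 := sub_eq_zero.2 hu.apply_eq_smul
  rw [sq, Module.End.mul_apply, ← hy, ← hs, map_smul, hNu, smul_zero, LinearMap.zero_apply]

theorem toLin'_ne_algebraMap_of_not_isDiagonalizable (hA : ¬ IsDiagonalizable A) (l : ℝ) :
    A.toLin' ≠ algebraMap ℝ _ l := by
  intro h
  have hdiag : A = Matrix.diagonal fun _ ↦ l :=
    Matrix.toLinAlgEquiv'.injective (h.trans (Matrix.toLinAlgEquiv'.commutes l).symm)
  refine hA ⟨1, by simp, ?_⟩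
  rw [hdiag, inv_one, one_mul, mul_one]
  exact Matrix.isDiag_diagonal _

end Diagonalizable

/-- The Mathlib proper cone, that is, closed convex cone, underlying a cone `K` that is proper in
the sense of `IsProperCone`; being pointed and solid is not recorded in the bundled object. -/
def IsProperCone.toProperCone_s3 {m : ℕ} {K : Set (Fin m → ℝ)} (hK : IsProperCone K) :
    ProperCone ℝ (Fin m → ℝ) where
  carrier := K
  add_mem' hx hy := hK.2.1 _ hx _ hy
  zero_mem' := (hK.2.2.2.1.symm.subset rfl).1
  smul_mem' a _ hx := hK.1 a a.2 _ hx
  isClosed' := hK.2.2.1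

theorem hasEigenvector_toLin'_iff {R n : Type*} [CommRing R] [Fintype n] [DecidableEq n]
    {A : Matrix n n R} {μ : R} {u : n → R} :
    Module.End.HasEigenvector A.toLin' μ u ↔ u ≠ 0 ∧ A.mulVec u = μ • u := by
  rw [Module.End.hasEigenvector_iff, Module.End.mem_eigenspace_iff, Matrix.toLin'_apply, and_comm]

/-- Theorem: if `A` is a non-diagonalizable real `2×2` matrix with eigenvalue
`l ≥ 0` and `K` is an `A`-invariant proper cone, then `K` contains an
eigenvector of `A`, and no eigenvector of `A` lies in the interior of `K`. -/
theorem eigenvector_on_boundary_of_nondiagonalizable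
    (A : Matrix (Fin 2) (Fin 2) ℝ) (l : ℝ) (hl : 0 ≤ l)
    (hnd : ¬ IsDiagonalizable A)
    (he : ∃ u : Fin 2 → ℝ, u ≠ 0 ∧ A.mulVec u = l • u)
    (K : Set (Fin 2 → ℝ)) (hK : IsProperCone K) (hinv : InvariantUnder A K) :
    (∃ u : Fin 2 → ℝ, u ≠ 0 ∧ A.mulVec u = l • u ∧ u ∈ K) ∧
    (∀ (μ : ℝ) (u : Fin 2 → ℝ), u ≠ 0 → A.mulVec u = μ • u → u ∉ interior K) := by
  obtain ⟨v, hv⟩ := he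
  have hl_eig : Module.End.HasEigenvalue A.toLin' l :=
    Module.End.hasEigenvalue_of_hasEigenvector (hasEigenvector_toLin'_iff.2 hv)
  obtain ⟨⟨u, huK, hu⟩, hboundary⟩ := eigenvector_on_boundary_of_nondiagonalizable_general
    (C := hK.toProperCone_s3) hl
    (toLin'_sub_algebraMap_sq_eq_zero_of_not_isDiagonalizable hnd hl_eig)
    (toLin'_ne_algebraMap_of_not_isDiagonalizable hnd l) hK.2.2.2.1 hK.2.2.2.2 hinv
  obtain ⟨hu₀, hAu⟩ := hasEigenvector_toLin'_iff.1 hu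
  exact ⟨⟨u, hu₀, hAu, huK⟩, fun μ w hw₀ hw ↦
    hboundary μ w (hasEigenvector_toLin'_iff.2 ⟨hw₀, hw⟩)⟩
end

section
/- Let A be a real 2×2 matrix with trace A ≥ 0 and det A < 0 (so A has real eigenvalues λ₁ = ρ(A) > 0 > λ₂). If K is an A-invariant proper cone and u is an eigenvector of A for λ₁ with u ∈ K, then u lies in the interior of K. -/
/-!
Let `l > 0` be the eigenvalue of `u`. The map `f` acts on the line `E ⧸ span u` as a scalar `m` with
`l * m = det f < 0`, so `m < 0`. For `x` in the interior of `K`, `f x - m • x` is a point of `K`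
plus an interior point, hence interior, and it is a multiple `c • u` of `u`. As `u ∈ K` and `K` is
salient, `c ≤ 0` is impossible: moving from `c • u` a little in the direction `-u` would reach a
negative multiple of `u` in `K`. So `c > 0`, and `u` is interior.
-/

open Module Set
open scoped Pointwise Topology

section Cone

theorem convexCone_add_mem_interior {R E : Type*} [Semiring R] [PartialOrder R] [AddCommGroup E]
    [SMul R E] [TopologicalSpace E] [ContinuousAdd E] {K : ConvexCone R E} {x y : E} (hx : x ∈ K)
    (hy : y ∈ interior (K : Set E)) : x + y ∈ interior (K : Set E) :=
  interior_mono (add_subset_iff.2 K.add_mem) (subset_interior_add_right (add_mem_add hx hy))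

variable {𝕜 E : Type*} [Field 𝕜] [LinearOrder 𝕜] [IsStrictOrderedRing 𝕜]
  [AddCommGroup E] [Module 𝕜 E] [TopologicalSpace E] {K : ConvexCone 𝕜 E} {c : 𝕜} {u x : E}

theorem convexCone_smul_mem_interior_iff [ContinuousConstSMul 𝕜 E] (hc : 0 < c) :
    c • x ∈ interior (K : Set E) ↔ x ∈ interior (K : Set E) := by
  have smul_eq : c • (K : Set E) = K := by
    ext z
    rw [mem_smul_set_iff_inv_smul_mem₀ hc.ne']
    exact K.smul_mem_iff (inv_pos.2 hc)
  conv_lhs => rw [← smul_eq, interior_smul₀ hc.ne', smul_mem_smul_set_iff₀ hc.ne']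

variable [TopologicalSpace 𝕜] [OrderTopology 𝕜] [ContinuousAdd E] [ContinuousSMul 𝕜 E]

variable (𝕜) in
theorem exists_pos_add_smul_mem_of_mem_interior {s : Set E} (hx : x ∈ interior s) (v : E) :
    ∃ ε : 𝕜, 0 < ε ∧ x + ε • v ∈ s := by
  have ray_tendsto : Filter.Tendsto (fun ε : 𝕜 ↦ x + ε • v) (𝓝[>] 0) (𝓝 x) := by
    have ray_continuous : Continuous fun ε : 𝕜 ↦ x + ε • v := by fun_prop
    simpa only [zero_smul, add_zero] using ray_continuous.continuousWithinAt.tendsto (x := 0)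
  have mem_eventually : ∀ᶠ ε : 𝕜 in 𝓝[>] 0, x + ε • v ∈ s :=
    ray_tendsto.eventually (mem_interior_iff_mem_nhds.1 hx)
  exact (eventually_mem_nhdsWithin.and mem_eventually).exists

theorem pos_of_smul_mem_interior_convexCone (hK : K.Salient) (hu : u ≠ 0) (huK : u ∈ K)
    (hcu : c • u ∈ interior (K : Set E)) : 0 < c := by
  by_contra! hc
  obtain ⟨ε, hε, hmem⟩ := exists_pos_add_smul_mem_of_mem_interior 𝕜 hcu (-u)
  have smul_neg_mem : (ε - c) • -u ∈ K := by
    rwa [show (ε - c) • -u = c • u + ε • -u by module]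
  exact hK u huK hu ((K.smul_mem_iff (by linarith)).1 smul_neg_mem)

end Cone

theorem exists_det_eq_mul_and_sub_smul_mem_span {F V : Type*} [Field F] [AddCommGroup V]
    [Module F V] (hV : finrank F V = 2) {f : End F V} {l : F} {u : V}
    (hu : f.HasEigenvector l u) :
    ∃ m : F, LinearMap.det f = l * m ∧ ∀ x, f x - m • x ∈ Submodule.span F {u} := by
  have : FiniteDimensional F V := .of_finrank_pos (by lia)
  set L := Submodule.span F {u}
  have finrank_L : finrank F L = 1 := finrank_span_singleton hu.2
  have finrank_quotient : finrank F (V ⧸ L) = 1 := by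
    have := L.finrank_quotient_add_finrank
    lia
  have map_eq : ∀ x ∈ L, f x = l • x := fun x hx ↦
    End.mem_eigenspace_iff.1 ((Submodule.span_singleton_le_iff_mem _ _).2 hu.1 hx)
  have invariant : L ≤ L.comap f := fun x hx ↦ by
    rw [Submodule.mem_comap, map_eq x hx]
    exact L.smul_mem l hx
  have restrict_eq : f.restrict (p := L) (q := L) invariant = l • LinearMap.id :=
    LinearMap.ext fun x ↦ Subtype.ext (map_eq x x.2)
  obtain ⟨m, mapQ_eq, -⟩ :=
    LinearMap.existsUnique_eq_smul_id_of_finrank_eq_one finrank_quotient (L.mapQ L f invariant)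
  refine ⟨m, ?_, fun x ↦ ?_⟩
  · rw [f.det_eq_det_mul_det L invariant, restrict_eq, mapQ_eq]
    simp only [LinearMap.det_smul, LinearMap.det_id, finrank_L, finrank_quotient, pow_one, mul_one]
  · exact (Submodule.Quotient.eq L).1 (LinearMap.congr_fun mapQ_eq (L.mkQ x))

theorem dominant_eigenvector_in_interior_general {𝕜 E : Type*} [Field 𝕜] [LinearOrder 𝕜]
    [IsStrictOrderedRing 𝕜] [TopologicalSpace 𝕜] [OrderTopology 𝕜] [AddCommGroup E] [Module 𝕜 E]
    [TopologicalSpace E] [ContinuousAdd E] [ContinuousSMul 𝕜 E] (hE : finrank 𝕜 E = 2)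
    {f : End 𝕜 E} (hdet : LinearMap.det f < 0) {K : ConvexCone 𝕜 E} (hK : K.Salient)
    (hint : (interior (K : Set E)).Nonempty) (hf : MapsTo f K K) {l : 𝕜} (hl : 0 < l) {u : E}
    (hu : f.HasEigenvector l u) (huK : u ∈ K) : u ∈ interior (K : Set E) := by
  obtain ⟨x, hx⟩ := hint
  obtain ⟨m, det_eq, sub_mem_span⟩ := exists_det_eq_mul_and_sub_smul_mem_span hE hu
  have neg_m_pos : 0 < -m := neg_pos.2 (neg_of_mul_neg_right (det_eq ▸ hdet) hl.le)
  obtain ⟨c, hc⟩ := Submodule.mem_span_singleton.1 (sub_mem_span x)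
  have smul_mem_interior : c • u ∈ interior (K : Set E) := by
    rw [hc, sub_eq_add_neg, ← neg_smul]
    exact convexCone_add_mem_interior (hf (interior_subset hx))
      ((convexCone_smul_mem_interior_iff neg_m_pos).2 hx)
  have c_pos := pos_of_smul_mem_interior_convexCone hK hu.2 huK smul_mem_interior
  exact (convexCone_smul_mem_interior_iff c_pos).1 smul_mem_interior

namespace IsProperCone

variable {n : ℕ} {K : Set (Fin n → ℝ)}

/-- A proper cone as a bundled convex cone, forgetting that it is closed, pointed and solid, so that
the theory of `ConvexCone` applies to it. -/
def toConvexCone (hK : IsProperCone K) : ConvexCone ℝ (Fin n → ℝ) where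
  carrier := K
  smul_mem' c hc x hx := hK.1 c hc.le x hx
  add_mem' x hx y hy := hK.2.1 x hx y hy

theorem salient_toConvexCone (hK : IsProperCone K) : hK.toConvexCone.Salient := by
  intro x hx hx0 hnx
  have hmem : x ∈ K ∩ -K := ⟨hx, hnx⟩
  rw [hK.2.2.2.1] at hmem
  exact hx0 hmem

end IsProperCone

/-- Theorem: let `A` be a real `2×2` matrix with `trace A ≥ 0` and
`det A < 0` (so its positive eigenvalue is the spectral radius). If `K` is
an `A`-invariant proper cone and `u ∈ K` is an eigenvector of `A` for the
positive (dominant) eigenvalue, then `u` lies in the interior of `K`. -/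
theorem dominant_eigenvector_in_interior
    (A : Matrix (Fin 2) (Fin 2) ℝ) (htr : 0 ≤ A.trace) (hdet : A.det < 0)
    (K : Set (Fin 2 → ℝ)) (hK : IsProperCone K) (hinv : InvariantUnder A K)
    (l₁ : ℝ) (hl₁ : 0 < l₁) (u : Fin 2 → ℝ) (hu : u ≠ 0)
    (heig : A.mulVec u = l₁ • u) (huK : u ∈ K) :
    u ∈ interior K :=
  dominant_eigenvector_in_interior_general (f := A.toLin') (finrank_fin_fun ℝ)
    (by rwa [LinearMap.det_toLin']) hK.salient_toConvexCone hK.2.2.2.2 hinv hl₁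
    ⟨End.mem_eigenspace_iff.2 heig, hu⟩ huK
end

section
/- Let A be a real 2×2 matrix with det A ≤ 0 and trace A ≥ 0. Then for every nonzero v ∈ ℝ², the cone Cone{v, Av} is A-invariant; moreover, Cone{v, Av} is a proper cone if and only if v is not an eigenvector of A. -/
/-!
By Cayley–Hamilton, `A (A v) = -det A • v + trace A • A v`, and the sign hypotheses make both
coefficients nonnegative; so `A` maps the generators `v` and `A v` into the cone they generate.

A cone generated by `m` vectors of `ℝ^m` is proper exactly when they are linearly independent: if
they are, coordinates with respect to them turn the cone into the nonnegative orthant, and if they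
are not, the cone lies in a proper subspace and has empty interior.
-/

section ConeGen

variable {m : ℕ} {X K : Set (Fin m → ℝ)} {x y : Fin m → ℝ}

theorem subset_coneGen : X ⊆ coneGen X :=
  fun _ hx _ hK => hK.2.2 hx

theorem smul_mem_coneGen {a : ℝ} (ha : 0 ≤ a) (hx : x ∈ coneGen X) : a • x ∈ coneGen X :=
  fun K hK => hK.1 a ha x (hx K hK)

theorem add_mem_coneGen (hx : x ∈ coneGen X) (hy : y ∈ coneGen X) : x + y ∈ coneGen X :=
  fun K hK => hK.2.1 x (hx K hK) y (hy K hK)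

theorem coneGen_subset (hsmul : ∀ a : ℝ, 0 ≤ a → ∀ x ∈ K, a • x ∈ K)
    (hadd : ∀ x ∈ K, ∀ y ∈ K, x + y ∈ K) (hX : X ⊆ K) : coneGen X ⊆ K :=
  fun _ hx => hx K ⟨hsmul, hadd, hX⟩

theorem coneGen_subset_span : coneGen X ⊆ Submodule.span ℝ X :=
  coneGen_subset (fun a _ _ => Submodule.smul_mem _ a)
    (fun _ hx _ hy => Submodule.add_mem _ hx hy) Submodule.subset_span

theorem zero_mem_coneGen (hX : X.Nonempty) : 0 ∈ coneGen X := by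
  obtain ⟨x, hx⟩ := hX
  simpa only [zero_smul] using smul_mem_coneGen le_rfl (subset_coneGen hx)

theorem invariantUnder_coneGen {A : Matrix (Fin m) (Fin m) ℝ}
    (h : ∀ x ∈ X, A.mulVec x ∈ coneGen X) : InvariantUnder A (coneGen X) := by
  refine coneGen_subset (K := {x | A.mulVec x ∈ coneGen X}) (fun a ha x hx => ?_)
    (fun x hx y hy => ?_) h
  · rw [Set.mem_ofPred_eq, Matrix.mulVec_smul]
    exact smul_mem_coneGen ha hx
  · rw [Set.mem_ofPred_eq, Matrix.mulVec_add]
    exact add_mem_coneGen hx hy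

theorem coneGen_range_basis {ι : Type*} [Finite ι] [Nonempty ι]
    (b : Module.Basis ι ℝ (Fin m → ℝ)) :
    coneGen (Set.range b) = b.equivFun ⁻¹' Set.Ici 0 := by
  classical
  have := Fintype.ofFinite ι
  apply Set.Subset.antisymm
  · refine coneGen_subset (fun a ha x (hx : 0 ≤ b.equivFun x) => ?_)
      (fun x (hx : 0 ≤ b.equivFun x) y (hy : 0 ≤ b.equivFun y) => ?_) ?_
    · rw [Set.mem_preimage, Set.mem_Ici, map_smul]
      exact smul_nonneg ha hx
    · rw [Set.mem_preimage, Set.mem_Ici, map_add]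
      exact add_nonneg hx hy
    · rintro _ ⟨i, rfl⟩ j
      rw [b.equivFun_self]
      split_ifs <;> simp
  · intro x hx
    rw [← b.sum_equivFun x]
    exact Finset.sum_induction _ (· ∈ coneGen (Set.range b)) (fun _ _ => add_mem_coneGen)
      (zero_mem_coneGen (Set.range_nonempty b))
      fun i _ => smul_mem_coneGen (hx i) (subset_coneGen (Set.mem_range_self i))

end ConeGen

section IsProperCone

variable {m n : ℕ}

theorem isProperCone_Ici_zero : IsProperCone (Set.Ici (0 : Fin m → ℝ)) := by
  refine ⟨fun a ha x hx => Set.mem_Ici.2 (smul_nonneg ha hx),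
    fun x hx y hy => Set.mem_Ici.2 (add_nonneg hx hy), isClosed_Ici, ?_, 1, ?_⟩
  · rw [Set.neg_Ici, neg_zero, Set.Ici_inter_Iic, Set.Icc_self]
  · exact mem_interior_iff_mem_nhds.2 (pi_Ici_mem_nhds fun _ => zero_lt_one)

theorem IsProperCone.preimage {K : Set (Fin n → ℝ)} (hK : IsProperCone K)
    (e : (Fin m → ℝ) ≃ₗ[ℝ] (Fin n → ℝ)) : IsProperCone (e ⁻¹' K) := by
  obtain ⟨hsmul, hadd, hclosed, hpointed, hsolid⟩ := hK
  let f := e.toContinuousLinearEquiv.toHomeomorph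
  refine ⟨fun a ha x hx => ?_, fun x hx y hy => ?_, hclosed.preimage f.continuous, ?_, ?_⟩
  · simpa only [Set.mem_preimage, map_smul] using hsmul a ha _ hx
  · simpa only [Set.mem_preimage, map_add] using hadd _ hx _ hy
  · ext x
    simpa using Set.ext_iff.1 hpointed (e x)
  · exact f.preimage_interior K ▸ hsolid.preimage f.surjective

theorem IsProperCone.span_eq_top {K : Set (Fin m → ℝ)} (hK : IsProperCone K) :
    Submodule.span ℝ K = ⊤ :=
  Submodule.eq_top_of_nonempty_interior' _
    (hK.2.2.2.2.mono (interior_mono Submodule.subset_span))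

theorem isProperCone_coneGen_range_iff [NeZero m] {b : Fin m → Fin m → ℝ} :
    IsProperCone (coneGen (Set.range b)) ↔ LinearIndependent ℝ b := by
  constructor
  · intro h
    refine linearIndependent_of_top_le_span_of_card_eq_finrank ?_ (by simp)
    rw [← h.span_eq_top]
    exact Submodule.span_le.2 coneGen_subset_span
  · intro h
    let B := basisOfLinearIndependentOfCardEqFinrank h (by simp)
    have hB : ⇑B = b := coe_basisOfLinearIndependentOfCardEqFinrank h _
    rw [← hB, coneGen_range_basis]
    exact isProperCone_Ici_zero.preimage B.equivFun

theorem isProperCone_coneGen_pair_iff {v w : Fin 2 → ℝ} (hv : v ≠ 0) :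
    IsProperCone (coneGen {v, w}) ↔ ∀ μ : ℝ, w ≠ μ • v := by
  rw [← Matrix.range_cons_cons_empty v w ![], isProperCone_coneGen_range_iff,
    LinearIndependent.pair_iff' hv]
  simp only [ne_comm]

end IsProperCone

section CayleyHamilton

variable {n R : Type*} [Fintype n] [DecidableEq n] [CommRing R]

theorem mul_self_eq_trace_smul_sub_det_smul_one (hn : Fintype.card n = 2) (A : Matrix n n R) :
    A * A = A.trace • A - A.det • 1 := by
  nontriviality R
  have cayley_hamilton := A.aeval_self_charpoly
  rw [A.charpoly_of_card_eq_two hn] at cayley_hamilton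
  simp only [map_add, map_sub, map_mul, Polynomial.aeval_X, Polynomial.aeval_C,
    Algebra.algebraMap_eq_smul_one, smul_mul_assoc, one_mul, sq] at cayley_hamilton
  rw [← sub_eq_zero, ← cayley_hamilton]
  abel

theorem mulVec_mulVec_eq_neg_det_smul_add_trace_smul (hn : Fintype.card n = 2)
    (A : Matrix n n R) (v : n → R) :
    A.mulVec (A.mulVec v) = -A.det • v + A.trace • A.mulVec v := by
  rw [Matrix.mulVec_mulVec, mul_self_eq_trace_smul_sub_det_smul_one hn, Matrix.sub_mulVec,
    Matrix.smul_mulVec, Matrix.smul_mulVec, Matrix.one_mulVec]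
  module

end CayleyHamilton

/-- Theorem: if `det A ≤ 0` and `trace A ≥ 0`, then for every nonzero `v`
the cone `Cone{v, Av}` is `A`-invariant; moreover it is a proper cone iff
`v` is not an eigenvector of `A`. -/
theorem cone_v_Av_invariant
    (A : Matrix (Fin 2) (Fin 2) ℝ) (hdet : A.det ≤ 0) (htr : 0 ≤ A.trace)
    (v : Fin 2 → ℝ) (hv : v ≠ 0) :
    InvariantUnder A (coneGen {v, A.mulVec v}) ∧
      (IsProperCone (coneGen {v, A.mulVec v}) ↔ ∀ μ : ℝ, A.mulVec v ≠ μ • v) := by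
  refine ⟨invariantUnder_coneGen ?_, isProperCone_coneGen_pair_iff hv⟩
  have hv_mem : v ∈ coneGen {v, A.mulVec v} := subset_coneGen (by simp)
  have hAv_mem : A.mulVec v ∈ coneGen {v, A.mulVec v} := subset_coneGen (by simp)
  rintro _ (rfl | rfl)
  · exact hAv_mem
  · rw [mulVec_mulVec_eq_neg_det_smul_add_trace_smul (Fintype.card_fin 2)]
    exact add_mem_coneGen (smul_mem_coneGen (neg_nonneg.2 hdet) hv_mem)
      (smul_mem_coneGen htr hAv_mem)
end
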